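/- For n ≥ 96, sat_3(n, Berge-K4) = n: the minimum number of hyperedges in an n-vertex 3-uniform Berge-K4-saturated hypergraph equals n. -/

import Mathlib

variable {V : Type*} [DecidableEq V]

/-- A Berge-K4 in the hyperedge set `E` with core vertices `a,b,c,d`:
four distinct vertices together with six distinct hyperedges, one assigned
to each pair of core vertices, each containing its assigned pair. -/
def IsBergeK4Core (E : Finset (Finset V)) (a b c d : V) : Prop :=
  a ≠ b ∧ a ≠ c ∧ a ≠ d ∧ b ≠ c ∧ b ≠ d ∧ c ≠ d ∧
  ∃ fab fac fad fbc fbd fcd : Finset V,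
    fab ∈ E ∧ fac ∈ E ∧ fad ∈ E ∧ fbc ∈ E ∧ fbd ∈ E ∧ fcd ∈ E ∧
    ([fab, fac, fad, fbc, fbd, fcd] : List (Finset V)).Nodup ∧
    a ∈ fab ∧ b ∈ fab ∧ a ∈ fac ∧ c ∈ fac ∧ a ∈ fad ∧ d ∈ fad ∧
    b ∈ fbc ∧ c ∈ fbc ∧ b ∈ fbd ∧ d ∈ fbd ∧ c ∈ fcd ∧ d ∈ fcd

/-- `E` contains a Berge-K4. -/
def IsBergeK4 (E : Finset (Finset V)) : Prop :=
  ∃ a b c d : V, IsBergeK4Core E a b c d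

/-- Every hyperedge has exactly 3 vertices. -/
def Is3Uniform (E : Finset (Finset V)) : Prop := ∀ e ∈ E, e.card = 3

/-- The degree of a vertex: the number of hyperedges containing it. -/
def hdeg (E : Finset (Finset V)) (v : V) : ℕ := (E.filter fun e => v ∈ e).card

/-- A 3-uniform Berge-K4-saturated hypergraph on the (finite) vertex type `V`:
it is 3-uniform, Berge-K4-free, and adding any non-hyperedge (3-element subset
of the vertices not already a hyperedge) creates a Berge-K4. -/
def IsSaturated [Fintype V] (E : Finset (Finset V)) : Prop :=
  Is3Uniform E ∧ ¬ IsBergeK4 E ∧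
    ∀ e : Finset V, e.card = 3 → e ∉ E → IsBergeK4 (insert e E)

/-- The pair `(u,v)` is good: there are two further vertices `x,y` (so that
`u,v,x,y` are four distinct vertices) and five distinct hyperedges, one for
each pair among `u,v,x,y` other than `uv`, each containing its assigned pair;
i.e. adding an edge on `{u,v}` completes a Berge-K4 with core `{u,v,x,y}`. -/
def GoodPair (E : Finset (Finset V)) (u v : V) : Prop :=
  ∃ x y : V, u ≠ v ∧ u ≠ x ∧ u ≠ y ∧ v ≠ x ∧ v ≠ y ∧ x ≠ y ∧
  ∃ eux euy evx evy exy : Finset V,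
    eux ∈ E ∧ euy ∈ E ∧ evx ∈ E ∧ evy ∈ E ∧ exy ∈ E ∧
    ([eux, euy, evx, evy, exy] : List (Finset V)).Nodup ∧
    u ∈ eux ∧ x ∈ eux ∧ u ∈ euy ∧ y ∈ euy ∧
    v ∈ evx ∧ x ∈ evx ∧ v ∈ evy ∧ y ∈ evy ∧
    x ∈ exy ∧ y ∈ exy

/-- The saturation number `sat_3(n, Berge-K4)`: the minimum number of
hyperedges over all `n`-vertex 3-uniform Berge-K4-saturated hypergraphs. -/
noncomputable def satNumber (n : ℕ) : ℕ :=
  sInf {m : ℕ | ∃ E : Finset (Finset (Fin n)), IsSaturated E ∧ E.card = m}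

/-!
A non-hyperedge of a saturated hypergraph contains a good pair. Four vertices spanning all but one
pair of a Berge-K4 have degree at least three, except for the two vertices of the missing pair,
which have degree at least two.

For the lower bound, suppose that there are fewer than `n` hyperedges. Only one vertex can have
degree less than two, so by the degree sum the total excess of the degrees over three is at most
the number of vertices of degree two. The excess is not small: it bounds the number of partners of
a vertex of degree at most three in good pairs, and if there were few partners, some non-hyperedge
would contain no good pair. So there are many vertices of degree two. Two of them can be chosen
such that every vertex of degree two is a partner of one of the two; then every hyperedge through a
vertex of degree two meets their neighbourhoods, which leaves room for only a bounded number of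
vertices of degree two unless some hyperedge `{x, y, a}` contains two of them, `x` and `y`. Good
pairs at `x` and `y` must use the apex `a`, which is therefore adjacent to all other vertices, so
that the excess is linear in `n`. But a bounded number of hyperedges contain exactly one vertex of
degree two, and at most one vertex of degree two avoids all of these: its two hyperedges have
apices, two different apices would dominate all vertices and force `n` hyperedges, and a vertex
with a single apex is in no good pair.

For the upper bound, a two-edge gadget is glued to a good pair that spans a Berge triangle with
every other vertex. This adds two vertices and two hyperedges, keeps the hypergraph saturated and
provides such a pair again, so it suffices to start with five and with six vertices.
-/

section Degree

variable {α : Type*} [DecidableEq α] {E F : Finset (Finset α)} {v : α} {e : Finset α}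

/-- The hyperedges of `E` containing `v`; their number is `hdeg E v`. -/
def incidentEdges (E : Finset (Finset α)) (v : α) : Finset (Finset α) :=
  E.filter (v ∈ ·)

lemma mem_incidentEdges : e ∈ incidentEdges E v ↔ e ∈ E ∧ v ∈ e := Finset.mem_filter

lemma card_incidentEdges : (incidentEdges E v).card = hdeg E v := rfl

lemma hdeg_mono (h : E ⊆ F) : hdeg E v ≤ hdeg F v :=
  Finset.card_le_card (Finset.filter_subset_filter _ h)

lemma hdeg_union_add_hdeg_inter (E F : Finset (Finset α)) (v : α) :
    hdeg (E ∪ F) v + hdeg (E ∩ F) v = hdeg E v + hdeg F v := by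
  simp only [hdeg, Finset.filter_union, Finset.filter_inter_distrib,
    Finset.card_union_add_card_inter]

lemma hdeg_union_of_disjoint (h : Disjoint E F) (v : α) :
    hdeg (E ∪ F) v = hdeg E v + hdeg F v := by
  rw [← hdeg_union_add_hdeg_inter, Finset.disjoint_iff_inter_eq_empty.1 h]
  rfl

lemma sum_hdeg_eq_sum_card_inter (E : Finset (Finset α)) (S : Finset α) :
    ∑ v ∈ S, hdeg E v = ∑ f ∈ E, (S ∩ f).card := by
  simp only [← Finset.filter_mem_eq_inter]
  exact Finset.sum_card_bipartiteAbove_eq_sum_card_bipartiteBelow (· ∈ ·)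

end Degree

section BergeAssignment

variable {α β : Type*} [DecidableEq α] [DecidableEq β]
  {E F : Finset (Finset α)} {P Q : Finset (Sym2 α)} {ψ : Sym2 α → Finset α}

/-- `ψ` sends the pairs in `P` to distinct hyperedges of `E` containing them, so that it is a
Berge copy in `E` of the graph with edge set `P`. The values of `ψ` outside `P` are irrelevant. -/
structure IsBergeAssignment {α : Type*} (E : Finset (Finset α)) (P : Finset (Sym2 α))
    (ψ : Sym2 α → Finset α) : Prop where
  injOn : Set.InjOn ψ P
  mem_edges : ∀ p ∈ P, ψ p ∈ E
  mem : ∀ p ∈ P, ∀ v ∈ p, v ∈ ψ p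

/-- `E` contains a Berge copy of the graph with edge set `P`, on these very vertices. -/
def HasBerge {α : Type*} (E : Finset (Finset α)) (P : Finset (Sym2 α)) : Prop :=
  ∃ ψ, IsBergeAssignment E P ψ

namespace IsBergeAssignment

lemma update (h : IsBergeAssignment E P ψ) {f : Finset α} (hf : f ∉ E) {p : Sym2 α}
    (hp : ∀ v ∈ p, v ∈ f) :
    IsBergeAssignment (insert f E) (insert p P) (Function.update ψ p f) := by
  have old {q : Sym2 α} (hq : q ∈ insert p P) (hqp : q ≠ p) :
      q ∈ P ∧ Function.update ψ p f q = ψ q :=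
    ⟨Finset.mem_of_mem_insert_of_ne hq hqp, Function.update_of_ne hqp ..⟩
  refine ⟨fun q hq r hr hqr ↦ ?_, fun q hq ↦ ?_, fun q hq ↦ ?_⟩
  · by_cases hqp : q = p <;> by_cases hrp : r = p
    · rw [hqp, hrp]
    · obtain ⟨hr, hψr⟩ := old hr hrp
      rw [hqp, Function.update_self, hψr] at hqr
      exact absurd (hqr ▸ h.mem_edges r hr) hf
    · obtain ⟨hq, hψq⟩ := old hq hqp
      rw [hrp, Function.update_self, hψq] at hqr
      exact absurd (hqr ▸ h.mem_edges q hq) hf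
    · rw [(old hq hqp).2, (old hr hrp).2] at hqr
      exact h.injOn (old hq hqp).1 (old hr hrp).1 hqr
  · by_cases hqp : q = p
    · simp [hqp]
    · rw [(old hq hqp).2]
      exact Finset.mem_insert_of_mem (h.mem_edges q (old hq hqp).1)
  · by_cases hqp : q = p
    · simpa [hqp] using hp
    · rw [(old hq hqp).2]
      exact h.mem q (old hq hqp).1

omit [DecidableEq α] in
lemma restrict (h : IsBergeAssignment E P ψ) (hQ : Q ⊆ P) (hF : ∀ p ∈ Q, ψ p ∈ F) :
    IsBergeAssignment F Q ψ :=
  ⟨h.injOn.mono hQ, hF, fun p hp ↦ h.mem p (hQ hp)⟩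

omit [DecidableEq α] in
lemma injOn_star (h : IsBergeAssignment E P ψ) {v : α} {S : Finset α}
    (hS : ∀ w ∈ S, s(v, w) ∈ P) : Set.InjOn (fun w ↦ ψ s(v, w)) S :=
  fun w hw w' hw' hww' ↦ Sym2.congr_right.1 (h.injOn (hS w hw) (hS w' hw') hww')

lemma mapsTo_star (h : IsBergeAssignment E P ψ) {v : α} {S : Finset α}
    (hS : ∀ w ∈ S, s(v, w) ∈ P) :
    Set.MapsTo (fun w ↦ ψ s(v, w)) S (incidentEdges E v) :=
  fun w hw ↦ mem_incidentEdges.2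
    ⟨h.mem_edges _ (hS w hw), h.mem _ (hS w hw) v (Sym2.mem_mk_left v w)⟩

lemma card_le_hdeg (h : IsBergeAssignment E P ψ) {v : α} {S : Finset α}
    (hS : ∀ w ∈ S, s(v, w) ∈ P) : S.card ≤ hdeg E v :=
  Finset.card_le_card_of_injOn _ (h.mapsTo_star hS) (h.injOn_star hS)

lemma exists_eq_of_hdeg_le (h : IsBergeAssignment E P ψ) {v : α} {S : Finset α}
    (hS : ∀ w ∈ S, s(v, w) ∈ P) (hdeg_le : hdeg E v ≤ S.card) {f : Finset α} (hf : f ∈ E)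
    (hv : v ∈ f) : ∃ w ∈ S, ψ s(v, w) = f := by
  simpa using Finset.surjOn_of_injOn_of_card_le _ (h.mapsTo_star hS) (h.injOn_star hS) hdeg_le
    (mem_incidentEdges.2 ⟨hf, hv⟩)

omit [DecidableEq α] in
lemma card_le (h : IsBergeAssignment E P ψ) : P.card ≤ E.card :=
  Finset.card_le_card_of_injOn ψ h.mem_edges h.injOn

omit [DecidableEq α] in
lemma exists_eq_of_card_le (h : IsBergeAssignment E P ψ) (hcard : E.card ≤ P.card)
    {f : Finset α} (hf : f ∈ E) : ∃ p ∈ P, ψ p = f := by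
  simpa using Finset.surjOn_of_injOn_of_card_le ψ h.mem_edges h.injOn hcard hf

end IsBergeAssignment

namespace HasBerge

omit [DecidableEq α] in
lemma mono (h : HasBerge E P) (hE : E ⊆ F) (hP : Q ⊆ P) : HasBerge F Q :=
  h.imp fun _ hψ ↦ hψ.restrict hP fun p hp ↦ hE (hψ.mem_edges p (hP hp))

lemma insert (h : HasBerge E P) {f : Finset α} (hf : f ∉ E) {p : Sym2 α}
    (hp : ∀ v ∈ p, v ∈ f) : HasBerge (insert f E) (insert p P) :=
  let ⟨_, hψ⟩ := h
  ⟨_, hψ.update hf hp⟩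

lemma of_insert {e : Finset α} (h : HasBerge (Insert.insert e E) P) :
    HasBerge E P ∨ ∃ p ∈ P, (∀ v ∈ p, v ∈ e) ∧ HasBerge E (P.erase p) := by
  obtain ⟨ψ, hψ⟩ := h
  by_cases hp : ∃ p ∈ P, ψ p = e
  · obtain ⟨p, hp, rfl⟩ := hp
    refine .inr ⟨p, hp, hψ.mem p hp, ψ, hψ.restrict (P.erase_subset p) fun q hq ↦ ?_⟩
    obtain ⟨hqp, hq⟩ := Finset.mem_erase.1 hq
    exact Finset.mem_of_mem_insert_of_ne (hψ.mem_edges q hq) fun h ↦ hqp (hψ.injOn hq hp h)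
  · exact .inl ⟨ψ, hψ.restrict subset_rfl fun q hq ↦
      Finset.mem_of_mem_insert_of_ne (hψ.mem_edges q hq) fun h ↦ hp ⟨q, hq, h⟩⟩

omit [DecidableEq α] in
lemma exists_edge (h : HasBerge E P) {p : Sym2 α} (hp : p ∈ P) :
    ∃ f ∈ E, ∀ v ∈ p, v ∈ f :=
  let ⟨ψ, hψ⟩ := h
  ⟨ψ p, hψ.mem_edges p hp, hψ.mem p hp⟩

lemma card_le_hdeg (h : HasBerge E P) {v : α} {S : Finset α} (hS : ∀ w ∈ S, s(v, w) ∈ P) :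
    S.card ≤ hdeg E v :=
  let ⟨_, hψ⟩ := h
  hψ.card_le_hdeg hS

lemma of_forall₂ {l : List (Sym2 α)} {L : List (Finset α)}
    (h : List.Forall₂ (fun p f ↦ ∀ v ∈ p, v ∈ f) l L) (hL : L.Nodup) :
    HasBerge L.toFinset l.toFinset := by
  induction h with
  | nil => exact ⟨fun _ ↦ ∅, by simp, by simp, by simp⟩
  | @cons p f l L hpf _ ih =>
    rw [List.nodup_cons] at hL
    simpa using (ih hL.2).insert (by simpa using hL.1) hpf

lemma toFinset_iff {l : List (Sym2 α)} (hl : l.Nodup) :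
    HasBerge E l.toFinset ↔ ∃ L : List (Finset α), L.Nodup ∧ (∀ f ∈ L, f ∈ E) ∧
      List.Forall₂ (fun p f ↦ ∀ v ∈ p, v ∈ f) l L := by
  constructor
  · rintro ⟨ψ, hψ⟩
    refine ⟨l.map ψ, hl.map_on fun p hp q hq ↦ hψ.injOn (by simpa) (by simpa), ?_, ?_⟩
    · simpa using hψ.mem_edges
    · rw [List.forall₂_map_right_iff, List.forall₂_same]
      exact fun p hp ↦ hψ.mem p (by simpa)
  · rintro ⟨L, hL, hLE, h⟩
    exact (of_forall₂ h hL).mono (fun f hf ↦ hLE f (List.mem_toFinset.1 hf)) subset_rfl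

omit [DecidableEq α] [DecidableEq β] in
lemma map {E' : Finset (Finset β)} (h : HasBerge E P) (φ : α ↪ β)
    (hE : ∀ e ∈ E, e.map φ ∈ E') : HasBerge E' (P.map φ.sym2Map) := by
  obtain ⟨ψ, hψ⟩ := h
  let ψ' := Function.extend φ.sym2Map (fun p ↦ (ψ p).map φ) fun _ ↦ ∅
  have hψ' (p) : ψ' (φ.sym2Map p) = (ψ p).map φ := φ.sym2Map.injective.extend_apply ..
  refine ⟨ψ', ?_, ?_, ?_⟩
  · rw [Finset.coe_map]
    rintro _ ⟨p, hp, rfl⟩ _ ⟨q, hq, rfl⟩ hpq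
    rw [hψ', hψ', Finset.map_inj] at hpq
    rw [hψ.injOn hp hq hpq]
  · simp only [Finset.forall_mem_map, hψ']
    exact fun p hp ↦ hE _ (hψ.mem_edges p hp)
  · simp only [Finset.forall_mem_map, hψ']
    intro p hp v hv
    obtain ⟨w, hw, rfl⟩ := Sym2.mem_map.1 hv
    exact Finset.mem_map_of_mem φ (hψ.mem p hp w hw)

end HasBerge

end BergeAssignment

section CliquePairs

variable {α β : Type*} [DecidableEq α] [DecidableEq β]
  {E : Finset (Finset α)} {C D : Finset α} {u v w : α}

/-- The edge set of the complete graph on `C`. -/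
def cliquePairs (C : Finset α) : Finset (Sym2 α) :=
  C.offDiag.image (Function.uncurry Sym2.mk)

lemma mk_mem_cliquePairs : s(u, v) ∈ cliquePairs C ↔ u ∈ C ∧ v ∈ C ∧ u ≠ v := by
  simp only [cliquePairs, Finset.mem_image, Finset.mem_offDiag, Prod.exists,
    Function.uncurry_apply_pair, Sym2.eq_iff]
  grind

lemma card_cliquePairs : (cliquePairs C).card = C.card.choose 2 :=
  Sym2.card_image_offDiag C

lemma cliquePairs_mono (h : C ⊆ D) : cliquePairs C ⊆ cliquePairs D :=
  Finset.image_subset_image (Finset.offDiag_mono h)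

lemma cliquePairs_insert (hu : u ∉ C) :
    cliquePairs (insert u C) = C.image (fun v ↦ s(u, v)) ∪ cliquePairs C := by
  ext p
  induction p with | _ x y
  simp only [mk_mem_cliquePairs, Finset.mem_union, Finset.mem_image, Finset.mem_insert,
    Sym2.eq_iff]
  grind

lemma cliquePairs_singleton : cliquePairs {u} = ∅ := by simp [cliquePairs]

lemma cliquePairs_map (φ : α ↪ β) : cliquePairs (C.map φ) = (cliquePairs C).map φ.sym2Map := by
  ext p
  simp only [cliquePairs, Finset.mem_image, Finset.mem_offDiag, Finset.mem_map, Prod.exists,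
    Function.uncurry_apply_pair, Function.Embedding.sym2Map_apply]
  constructor
  · rintro ⟨_, _, ⟨⟨x, hx, rfl⟩, ⟨y, hy, rfl⟩, hxy⟩, rfl⟩
    exact ⟨_, ⟨x, y, ⟨hx, hy, fun h ↦ hxy (h ▸ rfl)⟩, rfl⟩, Sym2.map_mk ..⟩
  · rintro ⟨_, ⟨x, y, ⟨hx, hy, hxy⟩, rfl⟩, rfl⟩
    exact ⟨_, _, ⟨⟨x, hx, rfl⟩, ⟨y, hy, rfl⟩, φ.injective.ne hxy⟩, (Sym2.map_mk ..).symm⟩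

omit [DecidableEq α] in
lemma nodup_four_iff {a b c d : α} :
    [a, b, c, d].Nodup ↔ a ≠ b ∧ a ≠ c ∧ a ≠ d ∧ b ≠ c ∧ b ≠ d ∧ c ≠ d := by
  simp only [List.nodup_cons, List.mem_cons, List.not_mem_nil, or_false, not_or]
  tauto

lemma cliquePairs_four {a b c d : α} (h : [a, b, c, d].Nodup) :
    cliquePairs {a, b, c, d} =
      [s(a, b), s(a, c), s(a, d), s(b, c), s(b, d), s(c, d)].toFinset := by
  obtain ⟨hab, hac, had, hbc, hbd, hcd⟩ := nodup_four_iff.1 h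
  rw [cliquePairs_insert, cliquePairs_insert, cliquePairs_insert, cliquePairs_singleton]
  · ext p
    simp only [Finset.image_insert, Finset.image_singleton, Finset.mem_union, Finset.mem_insert,
      Finset.mem_singleton, List.mem_toFinset, List.mem_cons, List.not_mem_nil]
    tauto
  all_goals simp [*]

omit [DecidableEq α] in
lemma nodup_pairs_four {a b c d : α} (h : [a, b, c, d].Nodup) :
    [s(a, b), s(a, c), s(a, d), s(b, c), s(b, d), s(c, d)].Nodup := by
  obtain ⟨hab, hac, had, hbc, hbd, hcd⟩ := nodup_four_iff.1 h
  simp [*]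

lemma isBergeK4Core_iff {a b c d : α} :
    IsBergeK4Core E a b c d ↔ [a, b, c, d].Nodup ∧ HasBerge E (cliquePairs {a, b, c, d}) := by
  rw [IsBergeK4Core, nodup_four_iff]
  simp only [and_assoc]
  refine and_congr_right fun hab ↦ and_congr_right fun hac ↦ and_congr_right fun had ↦
    and_congr_right fun hbc ↦ and_congr_right fun hbd ↦ and_congr_right fun hcd ↦ ?_
  have nodup : [a, b, c, d].Nodup := nodup_four_iff.2 ⟨hab, hac, had, hbc, hbd, hcd⟩
  rw [cliquePairs_four nodup, HasBerge.toFinset_iff (nodup_pairs_four nodup)]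
  simp only [List.forall₂_cons_left_iff, List.forall₂_nil_left_iff, Sym2.ball]
  constructor
  · rintro ⟨f₁, f₂, f₃, f₄, f₅, f₆, h⟩
    refine ⟨[f₁, f₂, f₃, f₄, f₅, f₆], ?_⟩
    simp_all
  · rintro ⟨_, hL, hE, f₁, _, h₁, ⟨f₂, _, h₂, ⟨f₃, _, h₃, ⟨f₄, _, h₄, ⟨f₅, _, h₅, ⟨f₆, _, h₆, rfl,
      rfl⟩, rfl⟩, rfl⟩, rfl⟩, rfl⟩, rfl⟩
    refine ⟨f₁, f₂, f₃, f₄, f₅, f₆, ?_⟩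
    simp_all

lemma goodPair_iff_nodup_hasBerge : GoodPair E u v ↔
    ∃ x y, [u, v, x, y].Nodup ∧ HasBerge E ((cliquePairs {u, v, x, y}).erase s(u, v)) := by
  rw [GoodPair]
  refine exists_congr fun x ↦ exists_congr fun y ↦ ?_
  rw [nodup_four_iff]
  simp only [and_assoc]
  refine and_congr_right fun huv ↦ and_congr_right fun hux ↦ and_congr_right fun huy ↦
    and_congr_right fun hvx ↦ and_congr_right fun hvy ↦ and_congr_right fun hxy ↦ ?_
  have nodup : [u, v, x, y].Nodup := nodup_four_iff.2 ⟨huv, hux, huy, hvx, hvy, hxy⟩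
  have nodup_pairs := List.nodup_cons.1 (nodup_pairs_four nodup)
  rw [cliquePairs_four nodup, List.toFinset_cons,
    Finset.erase_insert (by simpa using nodup_pairs.1), HasBerge.toFinset_iff nodup_pairs.2]
  simp only [List.forall₂_cons_left_iff, List.forall₂_nil_left_iff, Sym2.ball]
  constructor
  · rintro ⟨f₁, f₂, f₃, f₄, f₅, h⟩
    refine ⟨[f₁, f₂, f₃, f₄, f₅], ?_⟩
    simp_all
  · rintro ⟨_, hL, hE, f₁, _, h₁, ⟨f₂, _, h₂, ⟨f₃, _, h₃, ⟨f₄, _, h₄, ⟨f₅, _, h₅, rfl,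
      rfl⟩, rfl⟩, rfl⟩, rfl⟩, rfl⟩
    refine ⟨f₁, f₂, f₃, f₄, f₅, ?_⟩
    simp_all

lemma isBergeK4_iff : IsBergeK4 E ↔ ∃ C : Finset α, C.card = 4 ∧ HasBerge E (cliquePairs C) := by
  simp only [IsBergeK4, isBergeK4Core_iff]
  constructor
  · rintro ⟨a, b, c, d, hn, h⟩
    exact ⟨_, by simpa using List.toFinset_card_of_nodup hn, h⟩
  · rintro ⟨C, hC, h⟩
    obtain ⟨a, T, ha, rfl, hT⟩ := Finset.card_eq_succ.1 hC
    obtain ⟨b, c, d, hbc, hbd, hcd, rfl⟩ := Finset.card_eq_three.1 hT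
    simp only [Finset.mem_insert, Finset.mem_singleton, not_or] at ha
    exact ⟨a, b, c, d, nodup_four_iff.2 ⟨ha.1, ha.2.1, ha.2.2, hbc, hbd, hcd⟩, h⟩

lemma goodPair_iff : GoodPair E u v ↔ u ≠ v ∧
    ∃ C : Finset α, C.card = 4 ∧ u ∈ C ∧ v ∈ C ∧ HasBerge E ((cliquePairs C).erase s(u, v)) := by
  rw [goodPair_iff_nodup_hasBerge]
  constructor
  · rintro ⟨x, y, hn, h⟩
    exact ⟨(nodup_four_iff.1 hn).1, _, by simpa using List.toFinset_card_of_nodup hn, by simp,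
      by simp, h⟩
  · rintro ⟨huv, C, hC, hu, hv, h⟩
    obtain ⟨x, y, hxy, hC'⟩ := Finset.card_eq_two.1
      (by rw [Finset.card_sdiff_of_subset (by grind), hC, Finset.card_pair huv] :
        (C \ {u, v}).card = 2)
    obtain rfl : C = {u, v, x, y} := by
      rw [← Finset.sdiff_union_of_subset (by grind : {u, v} ⊆ C), hC']
      grind
    exact ⟨x, y, nodup_four_iff.2 (by grind), h⟩

end CliquePairs

section GoodPair

variable {α β : Type*} [DecidableEq α] [DecidableEq β]
  {E F : Finset (Finset α)} {u v w : α} {e : Finset α}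

namespace GoodPair

omit [DecidableEq α] in
lemma ne (h : GoodPair E u v) : u ≠ v := by
  classical
  exact (goodPair_iff.1 h).1

omit [DecidableEq α] in
lemma symm (h : GoodPair E u v) : GoodPair E v u := by
  classical
  obtain ⟨huv, C, hC, hu, hv, hB⟩ := goodPair_iff.1 h
  exact goodPair_iff.2 ⟨huv.symm, C, hC, hv, hu, Sym2.eq_swap ▸ hB⟩

omit [DecidableEq α] [DecidableEq β] in
lemma map {E' : Finset (Finset β)} (h : GoodPair E u v) (φ : α ↪ β)
    (hE : ∀ e ∈ E, e.map φ ∈ E') : GoodPair E' (φ u) (φ v) := by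
  classical
  obtain ⟨huv, C, hC, hu, hv, hB⟩ := goodPair_iff.1 h
  refine goodPair_iff.2 ⟨φ.injective.ne huv, C.map φ, by rwa [Finset.card_map],
    Finset.mem_map_of_mem φ hu, Finset.mem_map_of_mem φ hv, ?_⟩
  rw [cliquePairs_map, show s(φ u, φ v) = φ.sym2Map s(u, v) from rfl, ← Finset.map_erase]
  exact hB.map φ hE

lemma two_le_hdeg (h : GoodPair E u v) : 2 ≤ hdeg E u := by
  obtain ⟨huv, C, hC, hu, hv, hB⟩ := goodPair_iff.1 h
  have hcard : (C \ {u, v}).card = 2 := by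
    rw [Finset.card_sdiff_of_subset (by grind), hC, Finset.card_pair huv]
  rw [← hcard]
  refine hB.card_le_hdeg fun w hw ↦ ?_
  rw [Finset.mem_erase, mk_mem_cliquePairs, Ne, Sym2.congr_right]
  grind

end GoodPair

lemma HasBerge.three_le_hdeg {C : Finset α} (h : HasBerge E (cliquePairs C)) (hC : C.card = 4)
    (hv : v ∈ C) : 3 ≤ hdeg E v := by
  rw [show 3 = (C.erase v).card by rw [Finset.card_erase_of_mem hv, hC]]
  exact h.card_le_hdeg fun w hw ↦ mk_mem_cliquePairs.2 (by grind)

lemma HasBerge.three_le_hdeg_of_erase {C : Finset α}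
    (h : HasBerge E ((cliquePairs C).erase s(u, v))) (hC : C.card = 4) (hw : w ∈ C)
    (hwuv : w ∉ ({u, v} : Finset α)) : 3 ≤ hdeg E w := by
  rw [show 3 = (C.erase w).card by rw [Finset.card_erase_of_mem hw, hC]]
  refine h.card_le_hdeg fun z hz ↦ ?_
  rw [Finset.mem_erase, mk_mem_cliquePairs, Ne, Sym2.eq_iff]
  grind

lemma GoodPair.exists_three_le_hdeg (h : GoodPair E u v) :
    ∃ x y, x ≠ y ∧ x ∉ ({u, v} : Finset α) ∧ y ∉ ({u, v} : Finset α) ∧ 3 ≤ hdeg E x ∧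
      3 ≤ hdeg E y := by
  obtain ⟨huv, C, hC, hu, hv, hB⟩ := goodPair_iff.1 h
  have hcard : (C \ {u, v}).card = 2 := by
    rw [Finset.card_sdiff_of_subset (by grind), hC, Finset.card_pair huv]
  obtain ⟨x, hx, y, hy, hxy⟩ := Finset.one_lt_card.1 (hcard ▸ one_lt_two)
  rw [Finset.mem_sdiff] at hx hy
  exact ⟨x, y, hxy, hx.2, hy.2, hB.three_le_hdeg_of_erase hC hx.1 hx.2,
    hB.three_le_hdeg_of_erase hC hy.1 hy.2⟩

lemma isBergeK4_insert_iff (hE : ¬ IsBergeK4 E) (he : e ∉ E) :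
    IsBergeK4 (insert e E) ↔ ∃ u ∈ e, ∃ v ∈ e, GoodPair E u v := by
  rw [isBergeK4_iff] at hE ⊢
  constructor
  · rintro ⟨C, hC, hB⟩
    obtain hB | ⟨p, hp, hpe, hB⟩ := hB.of_insert
    · exact absurd ⟨C, hC, hB⟩ hE
    induction p with | _ u v
    obtain ⟨hu, hv, huv⟩ := mk_mem_cliquePairs.1 hp
    rw [Sym2.ball] at hpe
    exact ⟨u, hpe.1, v, hpe.2, goodPair_iff.2 ⟨huv, C, hC, hu, hv, hB⟩⟩
  · rintro ⟨u, hue, v, hve, h⟩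
    obtain ⟨huv, C, hC, hu, hv, hB⟩ := goodPair_iff.1 h
    refine ⟨C, hC, ?_⟩
    rw [← Finset.insert_erase (mk_mem_cliquePairs.2 ⟨hu, hv, huv⟩)]
    exact hB.insert he (Sym2.ball.2 ⟨hue, hve⟩)

lemma isSaturated_iff [Fintype α] : IsSaturated E ↔ Is3Uniform E ∧ ¬ IsBergeK4 E ∧
    ∀ e : Finset α, e.card = 3 → e ∉ E → ∃ u ∈ e, ∃ v ∈ e, GoodPair E u v :=
  and_congr_right fun _ ↦ and_congr_right fun hE ↦ forall₂_congr fun _ _ ↦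
    forall_congr' fun he ↦ isBergeK4_insert_iff hE he

lemma IsSaturated.goodPair_or [Fintype α] (hE : IsSaturated E) (huv : u ≠ v)
    (huw : u ≠ w) (hvw : v ≠ w) (he : {u, v, w} ∉ E) :
    GoodPair E u v ∨ GoodPair E u w ∨ GoodPair E v w := by
  obtain ⟨x, hx, y, hy, h⟩ := (isSaturated_iff.1 hE).2.2 {u, v, w}
    (Finset.card_eq_three.2 ⟨u, v, w, huv, huw, hvw, rfl⟩) he
  have := h.ne
  have := h.symm
  grind

end GoodPair

section DegreeSum

variable {α : Type*} [DecidableEq α] {E : Finset (Finset α)} {S : Finset α} {u v : α}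
  {f : Finset α}

lemma Is3Uniform.sum_hdeg [Fintype α] (hE : Is3Uniform E) : ∑ v, hdeg E v = 3 * E.card := by
  simp only [sum_hdeg_eq_sum_card_inter, Finset.univ_inter]
  rw [Finset.sum_congr rfl hE, Finset.sum_const, smul_eq_mul, mul_comm]

lemma Is3Uniform.sum_hdeg_le (hE : Is3Uniform E) (S : Finset α) :
    ∑ v ∈ S, hdeg E v ≤ 3 * E.card := by
  rw [sum_hdeg_eq_sum_card_inter, mul_comm, ← smul_eq_mul]
  exact Finset.sum_le_card_nsmul _ _ _ fun f hf ↦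
    (Finset.card_le_card Finset.inter_subset_right).trans (hE f hf).le

/-- The vertices of degree two. -/
def degTwo [Fintype α] (E : Finset (Finset α)) : Finset α := {v | hdeg E v = 2}

lemma mem_degTwo [Fintype α] : v ∈ degTwo E ↔ hdeg E v = 2 := by simp [degTwo]

/-- The total amount by which vertex degrees exceed three, using truncated subtraction. -/
def excess [Fintype α] (E : Finset (Finset α)) : ℕ := ∑ v, (hdeg E v - 3)

lemma hdeg_le_excess_add [Fintype α] (E : Finset (Finset α)) (v : α) :
    hdeg E v ≤ excess E + 3 :=
  Nat.le_add_of_sub_le <| Finset.single_le_sum (f := fun v ↦ hdeg E v - 3)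
    (fun _ _ ↦ Nat.zero_le _) (Finset.mem_univ v)

lemma sum_hdeg_add_card_inter_degTwo_le [Fintype α] (E : Finset (Finset α)) (S : Finset α) :
    ∑ v ∈ S, hdeg E v + (S ∩ degTwo E).card ≤ 3 * S.card + excess E := by
  have hS : ∑ v ∈ S, (hdeg E v - 3) ≤ excess E :=
    Finset.sum_le_univ_sum_of_nonneg fun _ ↦ Nat.zero_le _
  have pointwise : ∑ v ∈ S, (hdeg E v + if hdeg E v = 2 then 1 else 0) ≤
      ∑ v ∈ S, (3 + (hdeg E v - 3)) :=
    Finset.sum_le_sum fun v _ ↦ by split_ifs <;> omega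
  rw [degTwo, ← Finset.filter_mem_eq_inter, Finset.card_filter]
  simp only [Finset.mem_filter_univ, Finset.sum_add_distrib, Finset.sum_const, smul_eq_mul]
    at pointwise ⊢
  omega

lemma card_filter_four_le_hdeg_le [Fintype α] (E : Finset (Finset α)) :
    (Finset.univ.filter fun v ↦ 4 ≤ hdeg E v).card ≤ excess E := by
  rw [Finset.card_filter]
  exact Finset.sum_le_sum fun v _ ↦ by split_ifs <;> omega

-- No good pair contains a vertex of degree at most one, so all triples through two such vertices
-- would be hyperedges.
lemma IsSaturated.card_filter_hdeg_le_one [Fintype α] (hE : IsSaturated E)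
    (hα : 4 ≤ Fintype.card α) : (Finset.univ.filter fun v ↦ hdeg E v ≤ 1).card ≤ 1 := by
  refine Finset.card_le_one.2 fun u hu v hv ↦ ?_
  simp only [Finset.mem_filter_univ] at hu hv
  by_contra huv
  have triple_mem {w : α} (hw : w ∉ ({u, v} : Finset α)) : {u, v, w} ∈ E := by
    simp only [Finset.mem_insert, Finset.mem_singleton, not_or] at hw
    by_contra hmem
    obtain h | h | h := hE.goodPair_or huv (Ne.symm hw.1) (Ne.symm hw.2) hmem <;>
      have := h.two_le_hdeg <;> omega
  have hcompl : 1 < ({u, v}ᶜ : Finset α).card := by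
    rw [Finset.card_compl, Finset.card_pair huv]
    omega
  obtain ⟨w, hw, w', hw', hww'⟩ := Finset.one_lt_card.1 hcompl
  have heq : ({u, v, w} : Finset α) = {u, v, w'} :=
    Finset.card_le_one.1 (card_incidentEdges.trans_le hu)
      _ (mem_incidentEdges.2 ⟨triple_mem (Finset.mem_compl.1 hw), by simp⟩)
      _ (mem_incidentEdges.2 ⟨triple_mem (Finset.mem_compl.1 hw'), by simp⟩)
  have hwmem : w ∈ ({u, v, w'} : Finset α) := heq ▸ by simp
  simp only [Finset.mem_compl, Finset.mem_insert, Finset.mem_singleton, not_or] at hw hwmem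
  tauto

lemma IsSaturated.excess_le_card_degTwo [Fintype α] (hE : IsSaturated E)
    (hα : 4 ≤ Fintype.card α) (hcard : E.card < Fintype.card α) :
    excess E ≤ (degTwo E).card := by
  have hlow := hE.card_filter_hdeg_le_one hα
  have pointwise : ∑ v, (3 + (hdeg E v - 3)) ≤
      ∑ v, (hdeg E v + (if hdeg E v = 2 then 1 else 0) + 3 * if hdeg E v ≤ 1 then 1 else 0) :=
    Finset.sum_le_sum fun v _ ↦ by split_ifs <;> omega
  simp only [Finset.sum_add_distrib, ← Finset.mul_sum, ← Finset.card_filter, hE.1.sum_hdeg,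
    Finset.sum_const, smul_eq_mul, Finset.card_univ] at pointwise
  rw [excess, degTwo]
  omega

/-- The neighbourhood of `u`: the other vertices of the hyperedges containing `u`. -/
def nbr (E : Finset (Finset α)) (u : α) : Finset α :=
  (incidentEdges E u).biUnion (Finset.erase · u)

lemma mem_nbr : v ∈ nbr E u ↔ v ≠ u ∧ ∃ f ∈ E, u ∈ f ∧ v ∈ f := by
  simp only [nbr, Finset.mem_biUnion, mem_incidentEdges, Finset.mem_erase]
  grind

lemma mem_nbr_comm : u ∈ nbr E v ↔ v ∈ nbr E u := by
  simp only [mem_nbr]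
  grind

lemma Is3Uniform.card_nbr_le (hE : Is3Uniform E) (u : α) : (nbr E u).card ≤ hdeg E u * 2 :=
  Finset.card_biUnion_le_card_mul _ _ _ fun f hf ↦ by
    rw [mem_incidentEdges] at hf
    rw [Finset.card_erase_of_mem hf.2, hE f hf.1]

lemma Is3Uniform.exists_eq_triple (hE : Is3Uniform E) (hf : f ∈ E) (hu : u ∈ f)
    (hv : v ∈ f) (huv : u ≠ v) : ∃ w, w ≠ u ∧ w ≠ v ∧ f = {u, v, w} := by
  obtain ⟨w, hw⟩ := Finset.card_eq_one.1
    (by rw [Finset.card_sdiff_of_subset (by grind), hE f hf, Finset.card_pair huv] :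
      (f \ {u, v}).card = 1)
  have hwf : w ∈ f \ {u, v} := hw ▸ Finset.mem_singleton_self w
  exact ⟨w, by grind, by grind, by grind⟩

end DegreeSum

section CloseVertices

variable {α : Type*} [Fintype α] [DecidableEq α] {E : Finset (Finset α)} {u v : α}

open scoped Classical in
/-- The vertex `u`, its neighbours, and its partners in good pairs. A triple through `u` without
other close vertices is a non-hyperedge in which no good pair contains `u`. -/
noncomputable def closeVertices (E : Finset (Finset α)) (u : α) : Finset α :=
  {v | v = u ∨ v ∈ nbr E u ∨ GoodPair E u v}

lemma mem_closeVertices : v ∈ closeVertices E u ↔ v = u ∨ v ∈ nbr E u ∨ GoodPair E u v := by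
  simp [closeVertices]

/-- The hyperedges at distance exactly one from `u`: they avoid `u` but meet its neighbourhood. -/
def secondEdges (E : Finset (Finset α)) (u : α) : Finset (Finset α) :=
  {f ∈ E | u ∉ f ∧ (nbr E u ∩ f).Nonempty}

omit [Fintype α] in
lemma card_secondEdges_add_card_nbr_le (E : Finset (Finset α)) (u : α) :
    (secondEdges E u).card + (nbr E u).card ≤ ∑ v ∈ nbr E u, hdeg E v := by
  have hdisj : Disjoint (secondEdges E u) (incidentEdges E u) := by
    refine Finset.disjoint_left.2 fun f hf hf' ↦ ?_
    exact (Finset.mem_filter.1 hf).2.1 (mem_incidentEdges.1 hf').2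
  have hsecond : (secondEdges E u).card ≤ ∑ v ∈ nbr E u, hdeg (secondEdges E u) v := by
    rw [sum_hdeg_eq_sum_card_inter, Finset.card_eq_sum_ones]
    exact Finset.sum_le_sum fun f hf ↦ Finset.card_pos.2 (Finset.mem_filter.1 hf).2.2
  have hfirst : (nbr E u).card ≤ ∑ v ∈ nbr E u, hdeg (incidentEdges E u) v := by
    rw [Finset.card_eq_sum_ones]
    refine Finset.sum_le_sum fun v hv ↦ Finset.card_pos.2 ?_
    obtain ⟨-, f, hf, hu, hv⟩ := mem_nbr.1 hv
    exact ⟨f, mem_incidentEdges.2 ⟨mem_incidentEdges.2 ⟨hf, hu⟩, hv⟩⟩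
  refine (add_le_add hsecond hfirst).trans ?_
  rw [← Finset.sum_add_distrib]
  refine Finset.sum_le_sum fun v _ ↦ ?_
  rw [← hdeg_union_of_disjoint hdisj]
  exact hdeg_mono (Finset.union_subset (Finset.filter_subset ..) (Finset.filter_subset ..))

lemma card_secondEdges_le (hE : Is3Uniform E) (hu : hdeg E u ≤ 3) :
    (secondEdges E u).card ≤ 12 + excess E := by
  have hsecond := card_secondEdges_add_card_nbr_le E u
  have hN := hE.card_nbr_le u
  have hsum := sum_hdeg_add_card_inter_degTwo_le E (nbr E u)
  omega

omit [Fintype α] in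
lemma GoodPair.two_le_hdeg_secondEdges (h : GoodPair E u v) (hv : v ∉ nbr E u) :
    2 ≤ hdeg (secondEdges E u) v := by
  obtain ⟨huv, C, hC, huC, hvC, ψ, hψ⟩ := goodPair_iff.1 h
  have hcard : (C \ {u, v}).card = 2 := by
    rw [Finset.card_sdiff_of_subset (by grind), hC, Finset.card_pair huv]
  have mem_pairs {w z : α} (hw : w ∈ C \ {u, v}) (hz : z ∈ ({u, v} : Finset α)) :
      s(z, w) ∈ (cliquePairs C).erase s(u, v) := by
    rw [Finset.mem_erase, mk_mem_cliquePairs, Ne, Sym2.eq_iff]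
    grind
  have hsecond : ∀ p ∈ (C \ {u, v}).image (s(v, ·)), ψ p ∈ secondEdges E u := by
    simp only [Finset.forall_mem_image]
    intro w hw
    have hvw := mem_pairs hw (by simp : v ∈ _)
    have huw := mem_pairs hw (by simp : u ∈ _)
    have hvψ := hψ.mem _ hvw v (Sym2.mem_mk_left v w)
    have hwN : w ∈ nbr E u := mem_nbr.2 ⟨by grind, _, hψ.mem_edges _ huw,
      hψ.mem _ huw u (Sym2.mem_mk_left u w), hψ.mem _ huw w (Sym2.mem_mk_right u w)⟩
    refine Finset.mem_filter.2 ⟨hψ.mem_edges _ hvw, fun huψ ↦ ?_, w, ?_⟩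
    · exact hv (mem_nbr.2 ⟨huv.symm, _, hψ.mem_edges _ hvw, huψ, hvψ⟩)
    · exact Finset.mem_inter.2 ⟨hwN, hψ.mem _ hvw w (Sym2.mem_mk_right v w)⟩
  rw [← hcard]
  exact (hψ.restrict (Finset.image_subset_iff.2 fun w hw ↦ mem_pairs hw (by simp))
    hsecond).card_le_hdeg fun w hw ↦ Finset.mem_image_of_mem _ hw

lemma card_closeVertices_le (hE : Is3Uniform E) (hu : hdeg E u ≤ 3) :
    (closeVertices E u).card ≤ 19 + excess E := by
  set W := closeVertices E u \ insert u (nbr E u)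
  have hW : W.card * 2 ≤ (secondEdges E u).card * 2 := calc
    W.card * 2 ≤ ∑ v ∈ W, hdeg (secondEdges E u) v := by
      rw [← smul_eq_mul]
      refine Finset.card_nsmul_le_sum _ _ _ fun v hv ↦ ?_
      obtain ⟨hclose, hv⟩ := Finset.mem_sdiff.1 hv
      rw [Finset.mem_insert, not_or] at hv
      exact (((mem_closeVertices.1 hclose).resolve_left hv.1).resolve_left
        hv.2).two_le_hdeg_secondEdges hv.2
    _ = ∑ f ∈ secondEdges E u, (W ∩ f).card := sum_hdeg_eq_sum_card_inter _ _
    _ ≤ (secondEdges E u).card * 2 := by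
      rw [← smul_eq_mul]
      refine Finset.sum_le_card_nsmul _ _ _ fun f hf ↦ Nat.le_of_lt_succ ?_
      obtain ⟨hf, -, w, hw⟩ := Finset.mem_filter.1 hf
      rw [Finset.mem_inter] at hw
      refine (Finset.card_lt_card ⟨Finset.inter_subset_right, fun hsub ↦ ?_⟩).trans_eq (hE f hf)
      grind
  have hcard : (closeVertices E u).card ≤ W.card + ((nbr E u).card + 1) :=
    Finset.card_le_card_sdiff_add_card.trans
      (Nat.add_le_add_left (Finset.card_insert_le u (nbr E u)) _)
  have hN := hE.card_nbr_le u
  have hsecond := card_secondEdges_le hE hu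
  omega

lemma IsSaturated.card_le_of_excess (hE : IsSaturated E) :
    Fintype.card α ≤ 2 * (19 + excess E) := by
  by_contra! hlt
  have hfour := card_filter_four_le_hdeg_le E
  have exists_low {S : Finset α} (hS : S.card + excess E < Fintype.card α) :
      ∃ v, v ∉ S ∧ hdeg E v ≤ 3 := by
    obtain ⟨v, -, hv⟩ := Finset.exists_mem_notMem_of_card_lt_card
      (s := S ∪ Finset.univ.filter fun v ↦ 4 ≤ hdeg E v) (t := Finset.univ)
      (by have := Finset.card_union_le S (Finset.univ.filter fun v ↦ 4 ≤ hdeg E v)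
          rw [Finset.card_univ]; omega)
    simp only [Finset.mem_union, Finset.mem_filter_univ, not_or, not_le] at hv
    exact ⟨v, hv.1, by omega⟩
  obtain ⟨u, -, hu⟩ := exists_low (S := ∅) (by simp; omega)
  have hcu := card_closeVertices_le hE.1 hu
  obtain ⟨v, hvu, hv⟩ := exists_low (S := closeVertices E u) (by omega)
  have hcv := card_closeVertices_le hE.1 hv
  obtain ⟨w, -, hw⟩ := Finset.exists_mem_notMem_of_card_lt_card
    (s := closeVertices E u ∪ closeVertices E v) (t := Finset.univ)
    (by have := Finset.card_union_le (closeVertices E u) (closeVertices E v)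
        rw [Finset.card_univ]; omega)
  simp only [Finset.mem_union, mem_closeVertices, not_or, mem_nbr, not_and, not_exists] at hvu hw
  have hmem : {u, v, w} ∉ E := fun h ↦ hvu.2.1 hvu.1 _ h (by simp) (by simp)
  obtain h | h | h :=
    hE.goodPair_or (Ne.symm hvu.1) (Ne.symm hw.1.1) (Ne.symm hw.2.1) hmem
  exacts [hvu.2.2 h, hw.1.2.2 h, hw.2.2.2 h]

end CloseVertices

section DegreeTwo

variable {α : Type*} [DecidableEq α] {E : Finset (Finset α)} {x y a b c p q : α}
  {e f g : Finset α}

/-- `f` and `g` are the two hyperedges containing the degree-two vertex `x`. -/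
structure HasEdges (E : Finset (Finset α)) (x : α) (f g : Finset α) : Prop where
  ne : f ≠ g
  incidentEdges_eq : incidentEdges E x = {f, g}

namespace HasEdges

lemma symm (h : HasEdges E x f g) : HasEdges E x g f :=
  ⟨h.ne.symm, h.incidentEdges_eq.trans (Finset.pair_comm f g)⟩

lemma hdeg_eq (h : HasEdges E x f g) : hdeg E x = 2 := by
  rw [← card_incidentEdges, h.incidentEdges_eq, Finset.card_pair h.ne]

lemma mem_left (h : HasEdges E x f g) : f ∈ E ∧ x ∈ f := by
  rw [← mem_incidentEdges, h.incidentEdges_eq]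
  exact Finset.mem_insert_self f {g}

lemma eq_or_eq (h : HasEdges E x f g) (he : e ∈ E) (hx : x ∈ e) : e = f ∨ e = g := by
  simpa [h.incidentEdges_eq] using mem_incidentEdges.2 ⟨he, hx⟩

end HasEdges

lemma exists_hasEdges (hx : hdeg E x = 2) (hf : f ∈ E) (hxf : x ∈ f) :
    ∃ g, HasEdges E x f g := by
  rw [← card_incidentEdges, Finset.card_eq_two] at hx
  obtain ⟨f', g, hne, heq⟩ := hx
  have hmem : f ∈ incidentEdges E x := mem_incidentEdges.2 ⟨hf, hxf⟩
  rw [heq, Finset.mem_insert, Finset.mem_singleton] at hmem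
  obtain rfl | rfl := hmem
  exacts [⟨g, hne, heq⟩, ⟨f', hne.symm, heq.trans (Finset.pair_comm _ _)⟩]

lemma hasEdges_of_mem (hx : hdeg E x = 2) (hf : f ∈ E) (hxf : x ∈ f) (hg : g ∈ E) (hxg : x ∈ g)
    (hfg : f ≠ g) : HasEdges E x f g := by
  obtain ⟨e, he⟩ := exists_hasEdges hx hf hxf
  rwa [(he.eq_or_eq hg hxg).resolve_left hfg.symm]

/-- What remains of a Berge-K4 with core `{x, c, p, q}` without the hyperedge for `x`, `c`, where
the two hyperedges `f` and `g` containing `x` are those joining `x` to `p` and to `q`. -/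
structure IsCompletion (E : Finset (Finset α)) (x c : α) (f g : Finset α) (p q : α) : Prop where
  nodup : [x, c, p, q].Nodup
  mem_left : p ∈ f
  mem_right : q ∈ g
  three_le_left : 3 ≤ hdeg E p
  three_le_right : 3 ≤ hdeg E q
  hasBerge : HasBerge E (cliquePairs {c, p, q})

lemma HasBerge.mem_nbr {C : Finset α} (h : HasBerge E (cliquePairs C)) (hp : p ∈ C) (hq : q ∈ C)
    (hpq : p ≠ q) : p ∈ nbr E q := by
  obtain ⟨f, hf, hmem⟩ := h.exists_edge (mk_mem_cliquePairs.2 ⟨hp, hq, hpq⟩)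
  rw [Sym2.ball] at hmem
  exact _root_.mem_nbr.2 ⟨hpq, f, hf, hmem.2, hmem.1⟩

lemma GoodPair.exists_isCompletion (h : GoodPair E x c) (hx : HasEdges E x f g) :
    ∃ p q, IsCompletion E x c f g p q := by
  obtain ⟨hxc, C, hC, hxC, hcC, ψ, hψ⟩ := goodPair_iff.1 h
  have mem_pairs {u w : α} (hu : u ∈ C) (hw : w ∈ C) (huw : u ≠ w)
      (hne : w ∉ ({x, c} : Finset α)) : s(u, w) ∈ (cliquePairs C).erase s(x, c) := by
    rw [Finset.mem_erase, mk_mem_cliquePairs, Ne, Sym2.eq_iff]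
    grind
  have hcard : (C \ {x, c}).card = 2 := by
    rw [Finset.card_sdiff_of_subset (by grind), hC, Finset.card_pair hxc]
  have exists_of_edge {e : Finset α} (he : e ∈ E ∧ x ∈ e) : ∃ w ∈ C \ {x, c}, ψ s(x, w) = e :=
    hψ.exists_eq_of_hdeg_le
      (fun w hw ↦ mem_pairs hxC (Finset.mem_sdiff.1 hw).1 (by grind) (Finset.mem_sdiff.1 hw).2)
      (hcard ▸ hx.hdeg_eq.le) he.1 he.2
  obtain ⟨p, hp, rfl⟩ := exists_of_edge hx.mem_left
  obtain ⟨q, hq, rfl⟩ := exists_of_edge hx.symm.mem_left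
  have hpq : p ≠ q := fun hpq ↦ hx.ne (by rw [hpq])
  have hpC := Finset.mem_sdiff.1 hp
  have hqC := Finset.mem_sdiff.1 hq
  have hsub : cliquePairs {c, p, q} ⊆ (cliquePairs C).erase s(x, c) := by
    have hC' : {c, p, q} ⊆ C := by simp [Finset.insert_subset_iff, hcC, hpC.1, hqC.1]
    refine fun r hr ↦ Finset.mem_erase.2 ⟨?_, cliquePairs_mono hC' hr⟩
    rintro rfl
    have := (mk_mem_cliquePairs.1 hr).1
    grind
  refine ⟨p, q, nodup_four_iff.2 (by grind), ?_, ?_, ?_, ?_,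
    HasBerge.mono ⟨ψ, hψ⟩ subset_rfl hsub⟩
  · exact hψ.mem _ (mem_pairs hxC hpC.1 (by grind) hpC.2) p (Sym2.mem_mk_right x p)
  · exact hψ.mem _ (mem_pairs hxC hqC.1 (by grind) hqC.2) q (Sym2.mem_mk_right x q)
  · exact HasBerge.three_le_hdeg_of_erase ⟨ψ, hψ⟩ hC hpC.1 hpC.2
  · exact HasBerge.three_le_hdeg_of_erase ⟨ψ, hψ⟩ hC hqC.1 hqC.2

lemma not_goodPair_of_mem (hx : hdeg E x = 2) (hy : hdeg E y = 2) (hf : f ∈ E) (hxf : x ∈ f)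
    (hyf : y ∈ f) : ¬ GoodPair E x y := by
  intro h
  obtain ⟨hxy, C, hC, hxC, hyC, ψ, hψ⟩ := goodPair_iff.1 h
  have hcard : (C \ {x, y}).card = 2 := by
    rw [Finset.card_sdiff_of_subset (by grind), hC, Finset.card_pair hxy]
  have mem_pairs {u : α} (hu : u ∈ ({x, y} : Finset α)) :
      ∀ w ∈ C \ {x, y}, s(u, w) ∈ (cliquePairs C).erase s(x, y) := by
    intro w hw
    rw [Finset.mem_erase, mk_mem_cliquePairs, Ne, Sym2.eq_iff]
    grind
  obtain ⟨w, hw, hwf⟩ :=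
    hψ.exists_eq_of_hdeg_le (mem_pairs (by simp)) (hcard ▸ hx.le) hf hxf
  obtain ⟨z, hz, hzf⟩ :=
    hψ.exists_eq_of_hdeg_le (mem_pairs (by simp)) (hcard ▸ hy.le) hf hyf
  have heq := hψ.injOn (mem_pairs (by simp) w hw) (mem_pairs (by simp) z hz) (hwf.trans hzf.symm)
  rw [Sym2.eq_iff] at heq
  grind

/-- Degree-two vertices `x` and `y` are twins with apex `a` if `{x, y, a}` is a hyperedge. -/
structure IsTwin (E : Finset (Finset α)) (x y a : α) : Prop where
  ne : x ≠ y
  apex_ne_left : a ≠ x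
  apex_ne_right : a ≠ y
  mem : {x, y, a} ∈ E
  hdeg_left : hdeg E x = 2
  hdeg_right : hdeg E y = 2

lemma Is3Uniform.exists_isTwin (hE : Is3Uniform E) (hf : f ∈ E) (hxf : x ∈ f) (hyf : y ∈ f)
    (hxy : x ≠ y) (hx : hdeg E x = 2) (hy : hdeg E y = 2) :
    ∃ a, f = {x, y, a} ∧ IsTwin E x y a := by
  obtain ⟨a, hax, hay, rfl⟩ := hE.exists_eq_triple hf hxf hyf hxy
  exact ⟨a, rfl, hxy, hax, hay, hf, hx, hy⟩

namespace IsTwin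

lemma symm (h : IsTwin E x y a) : IsTwin E y x a :=
  ⟨h.ne.symm, h.apex_ne_right, h.apex_ne_left, Finset.insert_comm x y {a} ▸ h.mem, h.hdeg_right,
    h.hdeg_left⟩

lemma eq_apex (h : IsTwin E x y a) (hp : p ∈ ({x, y, a} : Finset α)) (hp3 : 3 ≤ hdeg E p) :
    p = a := by
  have hx := h.hdeg_left
  have hy := h.hdeg_right
  simp only [Finset.mem_insert, Finset.mem_singleton] at hp
  obtain rfl | rfl | rfl := hp
  · omega
  · omega
  · rfl

lemma exists_isCompletion (h : IsTwin E x y a) (hx : HasEdges E x {x, y, a} g)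
    (hc : GoodPair E x c) : ∃ q, IsCompletion E x c {x, y, a} g a q := by
  obtain ⟨p, q, hpq⟩ := hc.exists_isCompletion hx
  obtain rfl := h.eq_apex hpq.mem_left hpq.three_le_left
  exact ⟨q, hpq⟩

lemma of_goodPair (h : IsTwin E x y a) (hc : GoodPair E x c) : c ∈ nbr E a ∧ 3 ≤ hdeg E a := by
  obtain ⟨g, hx⟩ := exists_hasEdges h.hdeg_left h.mem (Finset.mem_insert_self x _)
  obtain ⟨q, hq⟩ := h.exists_isCompletion hx hc
  exact ⟨hq.hasBerge.mem_nbr (by simp) (by simp) (nodup_four_iff.1 hq.nodup).2.2.2.1,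
    hq.three_le_left⟩

variable [Fintype α]

lemma goodPair_or (h : IsTwin E x y a) (hE : IsSaturated E) (hcx : c ≠ x) (hcy : c ≠ y)
    (hc : {x, y, c} ∉ E) : GoodPair E x c ∨ GoodPair E y c :=
  (hE.goodPair_or h.ne hcx.symm hcy.symm hc).resolve_left
    (not_goodPair_of_mem h.hdeg_left h.hdeg_right h.mem (by simp) (by simp))

lemma mem_nbr_apex (h : IsTwin E x y a) (hE : IsSaturated E) (hcx : c ≠ x) (hcy : c ≠ y)
    (hc : {x, y, c} ∉ E) : c ∈ nbr E a ∧ 2 ≤ hdeg E c ∧ 3 ≤ hdeg E a := by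
  obtain hxc | hyc := h.goodPair_or hE hcx hcy hc
  · exact ⟨(h.of_goodPair hxc).1, hxc.symm.two_le_hdeg, (h.of_goodPair hxc).2⟩
  · exact ⟨(h.symm.of_goodPair hyc).1, hyc.symm.two_le_hdeg, (h.symm.of_goodPair hyc).2⟩

lemma three_le_hdeg_apex (h : IsTwin E x y a) (hE : IsSaturated E) (hα : 7 ≤ Fintype.card α) :
    3 ≤ hdeg E a := by
  have hN := hE.1.card_nbr_le x
  have hx := h.hdeg_left
  obtain ⟨c, -, hc⟩ := Finset.exists_mem_notMem_of_card_lt_card (s := insert x (nbr E x))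
    (t := Finset.univ) (by
      have := Finset.card_insert_le x (nbr E x)
      rw [Finset.card_univ]
      omega)
  have hy : y ∈ nbr E x := mem_nbr.2 ⟨h.ne.symm, _, h.mem, by simp, by simp⟩
  rw [Finset.mem_insert, not_or] at hc
  refine (h.mem_nbr_apex hE hc.1 (fun hcy ↦ hc.2 (hcy ▸ hy)) fun hmem ↦ hc.2 ?_).2.2
  exact mem_nbr.2 ⟨hc.1, _, hmem, by simp, by simp⟩

end IsTwin

end DegreeTwo

section Codegree

variable {α : Type*} [DecidableEq α] {E : Finset (Finset α)} {a b c : α} {f : Finset α}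

/-- The number of hyperedges containing both `a` and `c`. -/
def codegree (E : Finset (Finset α)) (a c : α) : ℕ := hdeg (incidentEdges E a) c

lemma codegree_pos (hc : c ∈ nbr E a) : 0 < codegree E a c :=
  let ⟨_, f, hf, haf, hcf⟩ := mem_nbr.1 hc
  Finset.card_pos.2 ⟨f, mem_incidentEdges.2 ⟨mem_incidentEdges.2 ⟨hf, haf⟩, hcf⟩⟩

/-- The hyperedges containing both `a` and `b`. -/
def commonEdges (E : Finset (Finset α)) (a b : α) : Finset (Finset α) :=
  incidentEdges E a ∩ incidentEdges E b

lemma mem_commonEdges : f ∈ commonEdges E a b ↔ f ∈ E ∧ a ∈ f ∧ b ∈ f := by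
  simp only [commonEdges, Finset.mem_inter, mem_incidentEdges]
  tauto

lemma card_commonEdges (E : Finset (Finset α)) (a b : α) :
    (commonEdges E a b).card = codegree E a b := by
  rw [codegree, ← card_incidentEdges]
  congr 1
  ext f
  simp only [mem_commonEdges, mem_incidentEdges, and_assoc]

lemma one_le_hdeg_commonEdges (h : {a, b, c} ∈ E) : 1 ≤ hdeg (commonEdges E a b) c :=
  Finset.card_pos.2
    ⟨_, mem_incidentEdges.2 ⟨mem_commonEdges.2 ⟨h, by simp, by simp⟩, by simp⟩⟩

/-- The hyperedges containing neither `a` nor `b`. -/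
def offEdges (E : Finset (Finset α)) (a b : α) : Finset (Finset α) :=
  E \ (incidentEdges E a ∪ incidentEdges E b)

lemma mem_offEdges : f ∈ offEdges E a b ↔ f ∈ E ∧ a ∉ f ∧ b ∉ f := by
  simp only [offEdges, Finset.mem_sdiff, Finset.mem_union, mem_incidentEdges]
  tauto

lemma union_incidentEdges_subset (E : Finset (Finset α)) (a b : α) :
    incidentEdges E a ∪ incidentEdges E b ⊆ E :=
  Finset.union_subset (Finset.filter_subset ..) (Finset.filter_subset ..)

lemma hdeg_add_hdeg_commonEdges (E : Finset (Finset α)) (a b c : α) :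
    hdeg E c + hdeg (commonEdges E a b) c =
      codegree E a c + codegree E b c + hdeg (offEdges E a b) c := by
  have hsplit := hdeg_union_of_disjoint
    (Finset.sdiff_disjoint (s := incidentEdges E a ∪ incidentEdges E b) (t := E)) c
  rw [Finset.sdiff_union_of_subset (union_incidentEdges_subset E a b), ← offEdges] at hsplit
  rw [hsplit, add_assoc, commonEdges, hdeg_union_add_hdeg_inter, add_comm]
  rfl

lemma card_add_card_commonEdges (E : Finset (Finset α)) (a b : α) :
    E.card + (commonEdges E a b).card = hdeg E a + hdeg E b + (offEdges E a b).card := by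
  rw [← Finset.card_sdiff_add_card_eq_card (union_incidentEdges_subset E a b), ← offEdges,
    commonEdges, add_assoc, Finset.card_union_add_card_inter, add_comm]
  rfl

lemma hdeg_eq_card (h : ∀ f ∈ E, a ∈ f) : hdeg E a = E.card := by
  rw [hdeg, Finset.filter_true_of_mem h]

lemma codegree_self (E : Finset (Finset α)) (a : α) : codegree E a a = hdeg E a :=
  hdeg_eq_card fun _ hf ↦ (mem_incidentEdges.1 hf).2

lemma codegree_comm (E : Finset (Finset α)) (a b : α) : codegree E a b = codegree E b a := by
  rw [← card_commonEdges, ← card_commonEdges, commonEdges, commonEdges, Finset.inter_comm]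

variable [Fintype α]

lemma Is3Uniform.sum_compl_hdeg (hE : Is3Uniform E) (hab : a ≠ b) :
    ∑ c ∈ ({a, b}ᶜ : Finset α), hdeg E c + hdeg E a + hdeg E b = 3 * E.card := by
  rw [← hE.sum_hdeg, ← Finset.sum_add_sum_compl {a, b}, Finset.sum_pair hab]
  ring

lemma Is3Uniform.sum_codegree (hE : Is3Uniform E) (hab : a ≠ b) :
    ∑ c ∈ ({a, b}ᶜ : Finset α), (codegree E a c + codegree E b c) + 2 * (offEdges E a b).card =
      2 * E.card := by
  have uniform_incidentEdges (v : α) : Is3Uniform (incidentEdges E v) :=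
    fun f hf ↦ hE f (mem_incidentEdges.1 hf).1
  have ha := (uniform_incidentEdges a).sum_compl_hdeg hab
  have hb := (uniform_incidentEdges b).sum_compl_hdeg hab
  have hcard := card_add_card_commonEdges E a b
  simp only [← codegree.eq_def, codegree_self, card_incidentEdges, codegree_comm E b a] at ha hb
  rw [card_commonEdges] at hcard
  rw [Finset.sum_add_distrib]
  omega

end Codegree

section Dominating

variable {α : Type*} [Fintype α] [DecidableEq α] {E : Finset (Finset α)}
  {a b c u v w x z : α} {g B S : Finset α} {k : ℕ}

/-- `a` and `b` are both adjacent to all other vertices, none of which has degree one. -/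
structure IsDominating (E : Finset (Finset α)) (a b : α) : Prop where
  ne : a ≠ b
  mem_nbr_left : ∀ c, c ≠ a → c ≠ b → c ∈ nbr E a
  mem_nbr_right : ∀ c, c ≠ a → c ≠ b → c ∈ nbr E b
  two_le_hdeg : ∀ c, c ≠ a → c ≠ b → 2 ≤ hdeg E c

-- Almost all hyperedges at `a` avoid `B` otherwise. If `{a, u, w}` is one of them, then `u`, `w` is
-- not a good pair, so that saturation of the triple `{z, u, w}` provides a good pair at `z`.
lemma IsSaturated.exists_goodPair_notMem (hE : IsSaturated E) (hz : z ∈ B)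
    (hnbr : nbr E z ⊆ B) (hdom : ∀ c, c ∉ B → c ∈ nbr E a) (hlow : ∀ c, c ∉ B → hdeg E c = 2)
    (hk : ∀ r ∈ B, r ≠ a → codegree E a r ≤ k) (hcard : B.card * (1 + 2 * k) < Fintype.card α) :
    ∃ c, c ∉ B ∧ GoodPair E z c := by
  let N := (B.erase a).biUnion fun r ↦ nbr (incidentEdges E a) r
  have hN : N.card ≤ B.card * (2 * k) := by
    refine (Finset.card_biUnion_le_card_mul _ _ (2 * k) fun r hr ↦ ?_).trans
      (Nat.mul_le_mul_right _ (Finset.card_erase_le))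
    rw [Finset.mem_erase] at hr
    have huniform : Is3Uniform (incidentEdges E a) := fun f hf ↦ hE.1 f (mem_incidentEdges.1 hf).1
    rw [mul_comm]
    exact (huniform.card_nbr_le r).trans (Nat.mul_le_mul_right 2 (hk r hr.2 hr.1))
  obtain ⟨w, -, hw⟩ := Finset.exists_mem_notMem_of_card_lt_card (s := B ∪ N) (t := Finset.univ) (by
    have := Finset.card_union_le B N
    rw [Finset.card_univ]
    linarith)
  rw [Finset.mem_union, not_or] at hw
  obtain ⟨hwa, f, hf, haf, hwf⟩ := mem_nbr.1 (hdom w hw.1)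
  obtain ⟨w', hw'a, hw'w, rfl⟩ := hE.1.exists_eq_triple hf haf hwf hwa.symm
  have hw' : w' ∉ B := fun hw'B ↦ hw.2 <| Finset.mem_biUnion.2
    ⟨w', Finset.mem_erase.2 ⟨hw'a, hw'B⟩, mem_nbr.2
      ⟨hw'w.symm, _, mem_incidentEdges.2 ⟨hf, haf⟩, by simp, hwf⟩⟩
  have hzw : w ≠ z := fun h ↦ hw.1 (h ▸ hz)
  have hzw' : w' ≠ z := fun h ↦ hw' (h ▸ hz)
  have hmem : {z, w, w'} ∉ E := fun h ↦
    hw.1 (hnbr (mem_nbr.2 ⟨hzw, _, h, by simp, by simp⟩))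
  obtain h | h | h := hE.goodPair_or hzw.symm hzw'.symm hw'w.symm hmem
  · exact ⟨w, hw.1, h⟩
  · exact ⟨w', hw', h⟩
  · exact absurd h (not_goodPair_of_mem (hlow w hw.1) (hlow w' hw') hf hwf (by simp))

namespace IsDominating

lemma sum_codegree_add_le (h : IsDominating E a b) (hE : Is3Uniform E)
    (hlt : E.card < Fintype.card α) (hS : S ⊆ {a, b}ᶜ) :
    ∑ c ∈ S, (codegree E a c + codegree E b c) + 2 * (offEdges E a b).card ≤ 2 * S.card + 2 := by
  have htotal := hE.sum_codegree h.ne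
  have hrest : ({a, b}ᶜ \ S).card * 2 ≤
      ∑ c ∈ {a, b}ᶜ \ S, (codegree E a c + codegree E b c) := by
    rw [← smul_eq_mul]
    refine Finset.card_nsmul_le_sum _ _ _ fun c hc ↦ ?_
    simp only [Finset.mem_sdiff, Finset.mem_compl, Finset.mem_insert, Finset.mem_singleton,
      not_or] at hc
    exact Nat.add_le_add (Nat.succ_le_of_lt (codegree_pos (h.mem_nbr_left c hc.1.1 hc.1.2)))
      (Nat.succ_le_of_lt (codegree_pos (h.mem_nbr_right c hc.1.1 hc.1.2)))
  have hcard := Finset.card_sdiff_add_card_eq_card hS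
  have hcompl := Finset.card_add_card_compl {a, b}
  rw [← Finset.sum_sdiff hS] at htotal
  rw [Finset.card_pair h.ne] at hcompl
  omega

lemma card_offEdges_le_one (h : IsDominating E a b) (hE : Is3Uniform E)
    (hlt : E.card < Fintype.card α) : (offEdges E a b).card ≤ 1 := by
  have := h.sum_codegree_add_le hE hlt (Finset.empty_subset _)
  simp only [Finset.sum_empty, Finset.card_empty] at this
  omega

lemma sum_hdeg_add_le (h : IsDominating E a b) (hE : Is3Uniform E)
    (hlt : E.card < Fintype.card α) (hS : S ⊆ {a, b}ᶜ) :
    ∑ c ∈ S, (hdeg E c + hdeg (commonEdges E a b) c) ≤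
      2 * S.card + 2 + (offEdges E a b).card := by
  have huniform : Is3Uniform (offEdges E a b) := fun f hf ↦ hE f (mem_offEdges.1 hf).1
  have hoff := huniform.sum_hdeg_le S
  have hcodegree := h.sum_codegree_add_le hE hlt hS
  simp only [hdeg_add_hdeg_commonEdges, Finset.sum_add_distrib] at hcodegree ⊢
  omega

lemma codegree_left_le_three (h : IsDominating E a b) (hE : Is3Uniform E)
    (hlt : E.card < Fintype.card α) (hca : c ≠ a) : codegree E a c ≤ 3 := by
  obtain rfl | hcb := eq_or_ne c b
  · have huniform : Is3Uniform (commonEdges E a c) := fun f hf ↦ hE f (mem_commonEdges.1 hf).1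
    have hsum := h.sum_hdeg_add_le hE hlt subset_rfl
    have hoff := h.card_offEdges_le_one hE hlt
    have hcommon := huniform.sum_compl_hdeg h.ne
    have htwo : ({a, c}ᶜ : Finset α).card * 2 ≤ ∑ v ∈ ({a, c}ᶜ : Finset α), hdeg E v := by
      rw [← smul_eq_mul]
      refine Finset.card_nsmul_le_sum _ _ _ fun v hv ↦ ?_
      simp only [Finset.mem_compl, Finset.mem_insert, Finset.mem_singleton, not_or] at hv
      exact h.two_le_hdeg v hv.1 hv.2
    rw [hdeg_eq_card fun f hf ↦ (mem_commonEdges.1 hf).2.1,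
      hdeg_eq_card fun f hf ↦ (mem_commonEdges.1 hf).2.2, card_commonEdges] at hcommon
    rw [Finset.sum_add_distrib] at hsum
    omega
  · have hsum := h.sum_codegree_add_le hE hlt (S := {c}) (by simp [hca, hcb])
    have hpos := codegree_pos (h.mem_nbr_right c hca hcb)
    rw [Finset.sum_singleton, Finset.card_singleton] at hsum
    omega

lemma card_filter_three_le_hdeg_le (h : IsDominating E a b) (hE : Is3Uniform E)
    (hlt : E.card < Fintype.card α) : ({c ∈ {a, b}ᶜ | 3 ≤ hdeg E c} : Finset α).card ≤ 3 := by
  have hsum := h.sum_hdeg_add_le hE hlt (Finset.filter_subset (3 ≤ hdeg E ·) _)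
  have hoff := h.card_offEdges_le_one hE hlt
  have hthree : ({c ∈ {a, b}ᶜ | 3 ≤ hdeg E c} : Finset α).card * 3 ≤
      ∑ c ∈ ({a, b}ᶜ : Finset α) with 3 ≤ hdeg E c,
        (hdeg E c + hdeg (commonEdges E a b) c) := by
    rw [← smul_eq_mul]
    exact Finset.card_nsmul_le_sum _ _ _ fun c hc ↦
      le_add_of_le_left (Finset.mem_filter.1 hc).2
  omega

lemma exists_goodPair (h : IsDominating E a b) (hE : IsSaturated E)
    (hlt : E.card < Fintype.card α) (hα : 57 ≤ Fintype.card α) (hx : hdeg E x = 2)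
    (ha : a ∈ nbr E x) (hb : b ∈ nbr E x) : ∃ c, GoodPair E x c := by
  let R : Finset α := {c ∈ {a, b}ᶜ | 3 ≤ hdeg E c}
  have hR : R.card ≤ 3 := h.card_filter_three_le_hdeg_le hE.1 hlt
  have hN := hE.1.card_nbr_le x
  have hsub : nbr E x ⊆ insert x (R ∪ nbr E x) := by grind
  have hcard : (insert x (R ∪ nbr E x)).card ≤ 8 := by
    have := Finset.card_insert_le x (R ∪ nbr E x)
    have := Finset.card_union_le R (nbr E x)
    omega
  have outside {c : α} (hc : c ∉ insert x (R ∪ nbr E x)) : c ≠ a ∧ c ≠ b ∧ c ∉ R := by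
    grind
  have hlow (c) (hc : c ∉ insert x (R ∪ nbr E x)) : hdeg E c = 2 := by
    obtain ⟨hca, hcb, hcR⟩ := outside hc
    have hge := h.two_le_hdeg c hca hcb
    simp only [R, Finset.mem_filter, Finset.mem_compl, Finset.mem_insert, Finset.mem_singleton,
      hca, hcb, or_self, not_false_eq_true, true_and, not_le] at hcR
    omega
  obtain ⟨c, -, hc⟩ := hE.exists_goodPair_notMem (k := 3) (Finset.mem_insert_self x _) hsub
    (fun c hc ↦ h.mem_nbr_left c (outside hc).1 (outside hc).2.1) hlow
    (fun c _ hca ↦ h.codegree_left_le_three hE.1 hlt hca) (by omega)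
  exact ⟨c, hc⟩

lemma codegree_left_eq_one (h : IsDominating E a b) (hE : Is3Uniform E)
    (hlt : E.card < Fintype.card α) (hoff : (offEdges E a b).card = 1) (hca : c ≠ a)
    (hcb : c ≠ b) : codegree E a c = 1 := by
  have hsum := h.sum_codegree_add_le hE hlt (S := {c}) (by simp [hca, hcb])
  have ha := codegree_pos (h.mem_nbr_left c hca hcb)
  have hb := codegree_pos (h.mem_nbr_right c hca hcb)
  rw [Finset.sum_singleton, Finset.card_singleton] at hsum
  omega

lemma hdeg_add_hdeg_commonEdges_le (h : IsDominating E a b) (hE : Is3Uniform E)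
    (hlt : E.card < Fintype.card α) (hoff : offEdges E a b = {g}) (hca : c ≠ a) (hcb : c ≠ b) :
    hdeg E c + hdeg (commonEdges E a b) c ≤ 2 + if c ∈ g then 1 else 0 := by
  have hsum := h.sum_codegree_add_le hE hlt (S := {c}) (by simp [hca, hcb])
  have hdeg_off : hdeg (offEdges E a b) c = if c ∈ g then 1 else 0 := by
    rw [hoff, hdeg, Finset.filter_singleton]
    split_ifs <;> rfl
  rw [Finset.sum_singleton, hoff, Finset.card_singleton, Finset.card_singleton] at hsum
  rw [hdeg_add_hdeg_commonEdges, hdeg_off]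
  omega

lemma card_offEdges_eq_one (h : IsDominating E a b) (hE : Is3Uniform E)
    (hlt : E.card < Fintype.card α) (hwa : w ≠ a) (hwb : w ≠ b) (hw : {a, b, w} ∈ E)
    (huv : u ≠ v) (hu : u ∉ ({a, b} : Finset α)) (hv : v ∉ ({a, b} : Finset α))
    (hu3 : 3 ≤ hdeg E u) (hv3 : 3 ≤ hdeg E v) : (offEdges E a b).card = 1 := by
  simp only [Finset.mem_insert, Finset.mem_singleton, not_or] at hu hv
  have hoff := h.card_offEdges_le_one hE hlt
  have hw2 := h.two_le_hdeg w hwa hwb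
  have hcommon := one_le_hdeg_commonEdges hw
  have hsum_uv := h.sum_hdeg_add_le hE hlt (S := {u, v})
    (by simp [Finset.insert_subset_iff, hu, hv])
  rw [Finset.sum_pair huv, Finset.card_pair huv] at hsum_uv
  by_cases hmem : w = u ∨ w = v
  · obtain rfl | rfl := hmem <;> omega
  · have hwuv : w ∉ ({u, v} : Finset α) := by simpa using hmem
    have hsum := h.sum_hdeg_add_le hE hlt (S := insert w {u, v})
      (by simp [Finset.insert_subset_iff, hu, hv, hwa, hwb])
    rw [Finset.sum_insert hwuv, Finset.card_insert_of_notMem hwuv, Finset.sum_pair huv,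
      Finset.card_pair huv] at hsum
    omega

lemma offEdges_eq_singleton (h : IsDominating E a b) (hE : Is3Uniform E)
    (hlt : E.card < Fintype.card α) (hwa : w ≠ a) (hwb : w ≠ b) (hw : {a, b, w} ∈ E)
    (huv : u ≠ v) (hu : u ∉ ({a, b} : Finset α)) (hv : v ∉ ({a, b} : Finset α))
    (hu3 : 3 ≤ hdeg E u) (hv3 : 3 ≤ hdeg E v) :
    w ≠ u ∧ w ≠ v ∧ offEdges E a b = {{w, u, v}} := by
  have hoff := h.card_offEdges_eq_one hE hlt hwa hwb hw huv hu hv hu3 hv3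
  simp only [Finset.mem_insert, Finset.mem_singleton, not_or] at hu hv
  obtain ⟨g, hg⟩ := Finset.card_eq_one.1 hoff
  have hg3 : g.card = 3 :=
    hE g (mem_offEdges.1 (hg ▸ Finset.mem_singleton_self g : g ∈ offEdges E a b)).1
  have hle {c : α} (hca : c ≠ a) (hcb : c ≠ b) :=
    h.hdeg_add_hdeg_commonEdges_le hE hlt hg hca hcb
  have hw2 := h.two_le_hdeg w hwa hwb
  have hcommon := one_le_hdeg_commonEdges hw
  have hwle := hle hwa hwb
  have hule := hle hu.1 hu.2
  have hvle := hle hv.1 hv.2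
  have hwg : w ∈ g := by by_contra hwg; rw [if_neg hwg] at hwle; omega
  have hug : u ∈ g := by by_contra hug; rw [if_neg hug] at hule; omega
  have hvg : v ∈ g := by by_contra hvg; rw [if_neg hvg] at hvle; omega
  rw [if_pos hwg] at hwle
  have hwu : w ≠ u := by rintro rfl; omega
  have hwv : w ≠ v := by rintro rfl; omega
  have hsub : {w, u, v} ⊆ g := by simp [Finset.insert_subset_iff, hwg, hug, hvg]
  refine ⟨hwu, hwv, hg.trans (congrArg _ (Finset.eq_of_subset_of_card_le hsub ?_).symm)⟩
  rw [hg3, Finset.card_eq_three.2 ⟨w, u, v, hwu, hwv, huv, rfl⟩]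

lemma codegree_le_one (h : IsDominating E a b) (hE : Is3Uniform E)
    (hlt : E.card < Fintype.card α) (huv : u ≠ v) (hu : u ∉ ({a, b} : Finset α))
    (hv : v ∉ ({a, b} : Finset α)) (hu3 : 3 ≤ hdeg E u) (hv3 : 3 ≤ hdeg E v) :
    codegree E a b ≤ 1 := by
  rw [← card_commonEdges]
  refine Finset.card_le_one.2 fun f hf g hg ↦ ?_
  rw [mem_commonEdges] at hf hg
  obtain ⟨w, hwa, hwb, rfl⟩ := hE.exists_eq_triple hf.1 hf.2.1 hf.2.2 h.ne
  obtain ⟨w', hwa', hwb', rfl⟩ := hE.exists_eq_triple hg.1 hg.2.1 hg.2.2 h.ne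
  obtain ⟨hwu, hwv, hoff⟩ := h.offEdges_eq_singleton hE hlt hwa hwb hf.1 huv hu hv hu3 hv3
  obtain ⟨-, -, hoff'⟩ := h.offEdges_eq_singleton hE hlt hwa' hwb' hg.1 huv hu hv hu3 hv3
  have hmem : w ∈ ({w', u, v} : Finset α) :=
    Finset.singleton_inj.1 (hoff.symm.trans hoff') ▸ Finset.mem_insert_self w {u, v}
  simp only [Finset.mem_insert, Finset.mem_singleton, hwu, hwv, or_false] at hmem
  rw [hmem]

lemma exists_hasEdges_offEdges_eq (h : IsDominating E a b) (hE : Is3Uniform E)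
    (hlt : E.card < Fintype.card α) (hab : a ∈ nbr E b) (hgood : GoodPair E a b) :
    ∃ w u v, HasEdges E w {a, b, w} {w, u, v} ∧ offEdges E a b = {{w, u, v}} ∧
      codegree E a b ≤ 1 := by
  obtain ⟨u, v, huv, hu, hv, hu3, hv3⟩ := hgood.exists_three_le_hdeg
  obtain ⟨-, f, hf, hbf, haf⟩ := mem_nbr.1 hab
  obtain ⟨w, hwa, hwb, rfl⟩ := hE.exists_eq_triple hf haf hbf h.ne
  obtain ⟨-, -, hoff⟩ := h.offEdges_eq_singleton hE hlt hwa hwb hf huv hu hv hu3 hv3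
  refine ⟨w, u, v, ?_, hoff, h.codegree_le_one hE hlt huv hu hv hu3 hv3⟩
  obtain ⟨hg, hag, -⟩ := mem_offEdges.1 (hoff ▸ Finset.mem_singleton_self {w, u, v})
  refine hasEdges_of_mem ?_ hf (by simp) hg (by simp) fun heq ↦ hag (heq ▸ by simp)
  have hwle := h.hdeg_add_hdeg_commonEdges_le hE hlt hoff hwa hwb
  have hw2 := h.two_le_hdeg w hwa hwb
  have hcommon := one_le_hdeg_commonEdges hf
  rw [if_pos (Finset.mem_insert_self w _)] at hwle
  omega

lemma hdeg_le_three (h : IsDominating E a b) (hE : Is3Uniform E) (hlt : E.card < Fintype.card α)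
    (hoff : offEdges E a b = {g}) (hca : c ≠ a) (hcb : c ≠ b) : hdeg E c ≤ 3 := by
  have hle := h.hdeg_add_hdeg_commonEdges_le hE hlt hoff hca hcb
  split_ifs at hle <;> omega

lemma hdeg_eq_two (h : IsDominating E a b) (hE : Is3Uniform E) (hlt : E.card < Fintype.card α)
    (hoff : offEdges E a b = {g}) (hca : c ≠ a) (hcb : c ≠ b) (hcg : c ∉ g) :
    hdeg E c = 2 := by
  have hle := h.hdeg_add_hdeg_commonEdges_le hE hlt hoff hca hcb
  have hge := h.two_le_hdeg c hca hcb
  rw [if_neg hcg] at hle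
  omega

-- With `{a, b, w}` and `{w, u, v}` the hyperedges at `w`, a good pair `w`, `c` makes `c` a
-- neighbour of `u` or `v`; but these have bounded degree.
lemma not_goodPair (h : IsDominating E a b) (hE : IsSaturated E)
    (hlt : E.card < Fintype.card α) (hα : 46 ≤ Fintype.card α) (hab : a ∈ nbr E b) :
    ¬ GoodPair E a b := by
  intro hgood
  obtain ⟨w, u, v, hw, hoff, hcodegree⟩ := h.exists_hasEdges_offEdges_eq hE.1 hlt hab hgood
  obtain ⟨-, hag, hbg⟩ := mem_offEdges.1 (hoff ▸ Finset.mem_singleton_self {w, u, v})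
  simp only [Finset.mem_insert, Finset.mem_singleton, not_or] at hag hbg
  let B : Finset α := {w, u, v} ∪ (nbr E u ∪ nbr E v)
  have hB : B.card ≤ 15 := by
    have hu := h.hdeg_le_three hE.1 hlt hoff (Ne.symm hag.2.1) (Ne.symm hbg.2.1)
    have hv := h.hdeg_le_three hE.1 hlt hoff (Ne.symm hag.2.2) (Ne.symm hbg.2.2)
    have hNu := hE.1.card_nbr_le u
    have hNv := hE.1.card_nbr_le v
    have hcard : B.card ≤ _ := Finset.card_union_le {w, u, v} (nbr E u ∪ nbr E v)
    have hunion := Finset.card_union_le (nbr E u) (nbr E v)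
    have hg3 : ({w, u, v} : Finset α).card ≤ 3 := Finset.card_le_three
    omega
  have haB : a ∈ nbr E u :=
    mem_nbr_comm.1 (h.mem_nbr_left u (Ne.symm hag.2.1) (Ne.symm hbg.2.1))
  have hbB : b ∈ nbr E u :=
    mem_nbr_comm.1 (h.mem_nbr_right u (Ne.symm hag.2.1) (Ne.symm hbg.2.1))
  have outside {c : α} (hc : c ∉ B) : c ≠ a ∧ c ≠ b ∧ c ∉ ({w, u, v} : Finset α) := by
    grind
  have hnbr : nbr E w ⊆ B := by
    intro c hc
    obtain ⟨hcw, f, hf, hwf, hcf⟩ := mem_nbr.1 hc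
    obtain rfl | rfl := hw.eq_or_eq hf hwf <;> grind
  have hk (r) (_ : r ∈ B) (hra : r ≠ a) : codegree E a r ≤ 1 := by
    obtain rfl | hrb := eq_or_ne r b
    · exact hcodegree
    · exact (h.codegree_left_eq_one hE.1 hlt (by rw [hoff, Finset.card_singleton]) hra hrb).le
  obtain ⟨c, hc, hwc⟩ := hE.exists_goodPair_notMem (z := w) (by simp [B]) hnbr
    (fun c hc ↦ h.mem_nbr_left c (outside hc).1 (outside hc).2.1)
    (fun c hc ↦ h.hdeg_eq_two hE.1 hlt hoff (outside hc).1 (outside hc).2.1 (outside hc).2.2)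
    hk (by omega)
  obtain ⟨p, q, hpq⟩ := hwc.exists_isCompletion hw
  obtain ⟨-, -, hwq, -, hcq, -⟩ := nodup_four_iff.1 hpq.nodup
  have hqg := hpq.mem_right
  have hcN := hpq.hasBerge.mem_nbr (p := c) (q := q) (by simp) (by simp) hcq
  grind

end IsDominating

end Dominating

section Twins

variable {α : Type*} [Fintype α] [DecidableEq α] {E : Finset (Finset α)} {x y z a b c : α}

namespace IsTwin

lemma hasEdges (h : IsTwin E x y a) (h' : IsTwin E x z b) (hE : IsSaturated E)
    (hα : 7 ≤ Fintype.card α) (hab : a ≠ b) : HasEdges E x {x, y, a} {x, z, b} := by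
  refine hasEdges_of_mem h.hdeg_left h.mem (by simp) h'.mem (by simp) fun heq ↦ hab ?_
  exact (h.eq_apex (heq ▸ by simp) (h'.three_le_hdeg_apex hE hα)).symm

lemma mem_nbr_apex_of_ne (h : IsTwin E x y a) (h' : IsTwin E x z b) (hE : IsSaturated E)
    (hα : 7 ≤ Fintype.card α) (hab : a ≠ b) (hca : c ≠ a) (hcb : c ≠ b) :
    c ∈ nbr E a ∧ 2 ≤ hdeg E c := by
  obtain rfl | hcx := eq_or_ne c x
  · exact ⟨mem_nbr.2 ⟨hca, _, h.mem, by simp, by simp⟩, h.hdeg_left.ge⟩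
  obtain rfl | hcy := eq_or_ne c y
  · exact ⟨mem_nbr.2 ⟨hca, _, h.mem, by simp, by simp⟩, h.hdeg_right.ge⟩
  refine (h.mem_nbr_apex hE hcx hcy fun hmem ↦ ?_).imp_right And.left
  obtain heq | heq := (h.hasEdges h' hE hα hab).eq_or_eq hmem (by simp)
  · have hc : c ∈ ({x, y, a} : Finset α) := heq ▸ by simp
    grind
  · have hc : c ∈ ({x, z, b} : Finset α) := heq ▸ by simp
    have hy : y ∈ ({x, z, b} : Finset α) := heq ▸ by simp
    have hyx := h.ne
    have hy2 := h.hdeg_right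
    have hb3 := h'.three_le_hdeg_apex hE hα
    grind

lemma isDominating (h : IsTwin E x y a) (h' : IsTwin E x z b) (hE : IsSaturated E)
    (hα : 7 ≤ Fintype.card α) (hab : a ≠ b) : IsDominating E a b where
  ne := hab
  mem_nbr_left _ hca hcb := (h.mem_nbr_apex_of_ne h' hE hα hab hca hcb).1
  mem_nbr_right _ hca hcb := (h'.mem_nbr_apex_of_ne h hE hα hab.symm hcb hca).1
  two_le_hdeg _ hca hcb := (h.mem_nbr_apex_of_ne h' hE hα hab hca hcb).2

lemma of_goodPair_of_ne (h : IsTwin E x y a) (h' : IsTwin E x z b) (hE : IsSaturated E)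
    (hα : 7 ≤ Fintype.card α) (hab : a ≠ b) (hc : GoodPair E x c) :
    c ≠ a ∧ c ≠ b ∧ a ∈ nbr E b := by
  obtain ⟨q, hq⟩ := h.exists_isCompletion (h.hasEdges h' hE hα hab) hc
  obtain rfl := h'.eq_apex hq.mem_right hq.three_le_right
  obtain ⟨-, -, -, hca, hcq, haq⟩ := nodup_four_iff.1 hq.nodup
  exact ⟨hca, hcq, hq.hasBerge.mem_nbr (by simp) (by simp) haq⟩

lemma card_le (h : IsTwin E x y a) (h' : IsTwin E x z b) (hE : IsSaturated E)
    (hα : 57 ≤ Fintype.card α) (hab : a ≠ b) : Fintype.card α ≤ E.card := by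
  by_contra! hlt
  have hα7 : 7 ≤ Fintype.card α := by omega
  have hdom := h.isDominating h' hE hα7 hab
  have ne_apex {d : α} (hd : GoodPair E x d) := h.of_goodPair_of_ne h' hE hα7 hab hd
  obtain ⟨c, hc⟩ := hdom.exists_goodPair hE hlt hα h.hdeg_left
    (mem_nbr.2 ⟨h.apex_ne_left, _, h.mem, by simp, by simp⟩)
    (mem_nbr.2 ⟨h'.apex_ne_left, _, h'.mem, by simp, by simp⟩)
  have hmem : {x, a, b} ∉ E := by
    intro hmem
    obtain heq | heq := (h.hasEdges h' hE hα7 hab).eq_or_eq hmem (by simp)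
    · exact hab (h.eq_apex (heq ▸ by simp) (h'.three_le_hdeg_apex hE hα7)).symm
    · exact hab (h'.eq_apex (heq ▸ by simp) (h.three_le_hdeg_apex hE hα7))
  obtain ha | hb | hgood := hE.goodPair_or h.apex_ne_left.symm h'.apex_ne_left.symm hab hmem
  · exact (ne_apex ha).1 rfl
  · exact (ne_apex hb).2.1 rfl
  · exact hdom.not_goodPair hE hlt (by omega) (ne_apex hc).2.2 hgood

end IsTwin

end Twins

section Counting

variable {α : Type*} [Fintype α] [DecidableEq α] {E : Finset (Finset α)} {x y a u : α}
  {f H : Finset α}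

lemma sum_card_degTwo_inter (E : Finset (Finset α)) :
    ∑ f ∈ E, (degTwo E ∩ f).card = 2 * (degTwo E).card := by
  rw [← sum_hdeg_eq_sum_card_inter, Finset.sum_congr rfl fun v hv ↦ mem_degTwo.1 hv,
    Finset.sum_const, smul_eq_mul, mul_comm]

/-- The hyperedges containing exactly one vertex of degree two. -/
def singleEdges (E : Finset (Finset α)) : Finset (Finset α) :=
  {f ∈ E | (degTwo E ∩ f).card = 1}

namespace IsSaturated

lemma card_degTwo_inter_le_two (hE : IsSaturated E) (hα : 7 ≤ Fintype.card α) (hf : f ∈ E) :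
    (degTwo E ∩ f).card ≤ 2 := by
  by_contra! hcard
  obtain ⟨x, y, c, hx, hy, hc, hxy, hxc, hyc⟩ := Finset.two_lt_card_iff.1 hcard
  simp only [Finset.mem_inter, mem_degTwo] at hx hy hc
  obtain ⟨a, rfl, h⟩ := hE.1.exists_isTwin hf hx.2 hy.2 hxy hx.1 hy.1
  have ha := h.three_le_hdeg_apex hE hα
  grind

lemma card_singleEdges_add_card_inter_le (hE : IsSaturated E) (hα : 7 ≤ Fintype.card α)
    (hlt : E.card < Fintype.card α)
    (hH : ∀ f ∈ E, (degTwo E ∩ f).Nonempty → (H ∩ f).Nonempty) :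
    (singleEdges E).card + 2 * (H ∩ degTwo E).card ≤ 6 * H.card := by
  have pointwise : ∑ f ∈ E, ((if (degTwo E ∩ f).card = 1 then 1 else 0) + (degTwo E ∩ f).card) ≤
      ∑ f ∈ E, 2 * (H ∩ f).card := by
    refine Finset.sum_le_sum fun f hf ↦ ?_
    have htwo := hE.card_degTwo_inter_le_two hα hf
    have hpos := hH f hf
    rw [← Finset.card_pos, ← Finset.card_pos] at hpos
    split_ifs <;> omega
  rw [Finset.sum_add_distrib, ← Finset.card_filter, sum_card_degTwo_inter, ← Finset.mul_sum,
    ← sum_hdeg_eq_sum_card_inter] at pointwise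
  have hsum := sum_hdeg_add_card_inter_degTwo_le E H
  have hexcess := hE.excess_le_card_degTwo (by omega) hlt
  rw [singleEdges]
  omega

end IsSaturated

omit [Fintype α] in
lemma nbr_inter_nonempty_of_mem (hE : Is3Uniform E) (hf : f ∈ E) (hx : x ∈ f) :
    (nbr E x ∩ f).Nonempty := by
  obtain ⟨p, hp, hpx⟩ := Finset.exists_mem_ne (by rw [hE f hf]; norm_num : 1 < f.card) x
  exact ⟨p, Finset.mem_inter.2 ⟨mem_nbr.2 ⟨hpx, f, hf, hx, hp⟩, hp⟩⟩

omit [Fintype α] in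
lemma GoodPair.nbr_inter_nonempty (h : GoodPair E u x) (hu : hdeg E u = 2) (hf : f ∈ E)
    (huf : u ∈ f) : (nbr E x ∩ f).Nonempty := by
  obtain ⟨g, hg⟩ := exists_hasEdges hu hf huf
  obtain ⟨p, q, hpq⟩ := h.exists_isCompletion hg
  obtain ⟨-, -, -, hxp, -⟩ := nodup_four_iff.1 hpq.nodup
  exact ⟨p, Finset.mem_inter.2 ⟨hpq.hasBerge.mem_nbr (by simp) (by simp) hxp.symm, hpq.mem_left⟩⟩

lemma nbr_union_nbr_inter_nonempty (hE : Is3Uniform E)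
    (hgood : ∀ u ∈ degTwo E, u ≠ x → u ≠ y → GoodPair E u x ∨ GoodPair E u y) (hf : f ∈ E)
    (h : (degTwo E ∩ f).Nonempty) : ((nbr E x ∪ nbr E y) ∩ f).Nonempty := by
  obtain ⟨u, hu⟩ := h
  rw [Finset.mem_inter] at hu
  rw [Finset.union_inter_distrib_right, Finset.union_nonempty]
  obtain rfl | hux := eq_or_ne u x
  · exact .inl (nbr_inter_nonempty_of_mem hE hf hu.2)
  obtain rfl | huy := eq_or_ne u y
  · exact .inr (nbr_inter_nonempty_of_mem hE hf hu.2)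
  exact (hgood u hu.1 hux huy).imp (·.nbr_inter_nonempty (mem_degTwo.1 hu.1) hf hu.2)
    (·.nbr_inter_nonempty (mem_degTwo.1 hu.1) hf hu.2)

namespace IsSaturated

lemma card_degTwo_le_of_forall_le_one (hE : IsSaturated E) (hα : 7 ≤ Fintype.card α)
    (hlt : E.card < Fintype.card α) (hone : ∀ f ∈ E, (degTwo E ∩ f).card ≤ 1) :
    (degTwo E).card ≤ 24 := by
  have hsingle : 2 * (degTwo E).card ≤ (singleEdges E).card := by
    rw [← sum_card_degTwo_inter, singleEdges, Finset.card_filter]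
    exact Finset.sum_le_sum fun f hf ↦ by have := hone f hf; split_ifs <;> omega
  obtain hempty | ⟨x, hx⟩ := (degTwo E).eq_empty_or_nonempty
  · simp [hempty]
  obtain ⟨y, hy, hgood⟩ : ∃ y ∈ degTwo E,
      ∀ u ∈ degTwo E, u ≠ x → u ≠ y → GoodPair E u x ∨ GoodPair E u y := by
    by_cases hall : ∀ u ∈ degTwo E, u ≠ x → GoodPair E u x
    · exact ⟨x, hx, fun u hu hux _ ↦ .inl (hall u hu hux)⟩
    push Not at hall
    obtain ⟨y, hy, hyx, hbad⟩ := hall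
    refine ⟨y, hy, fun u _ hux huy ↦ ?_⟩
    have hmem : {y, x, u} ∉ E := fun hmem ↦ hyx <| Finset.card_le_one.1 (hone _ hmem)
      y (Finset.mem_inter.2 ⟨hy, by simp⟩) x (Finset.mem_inter.2 ⟨hx, by simp⟩)
    obtain h | h | h := hE.goodPair_or hyx huy.symm hux.symm hmem
    exacts [absurd h hbad, .inr h.symm, .inl h.symm]
  have hcard := hE.card_singleEdges_add_card_inter_le hα hlt fun f hf ↦
    nbr_union_nbr_inter_nonempty hE.1 hgood hf
  have hunion := Finset.card_union_le (nbr E x) (nbr E y)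
  have hNx := hE.1.card_nbr_le x
  have hNy := hE.1.card_nbr_le y
  rw [mem_degTwo] at hx hy
  omega

end IsSaturated

lemma IsTwin.card_singleEdges_le (h : IsTwin E x y a) (hE : IsSaturated E)
    (hα : 7 ≤ Fintype.card α) (hlt : E.card < Fintype.card α) : (singleEdges E).card ≤ 38 := by
  have hgood (u) (hu : u ∈ degTwo E) (hux : u ≠ x) (huy : u ≠ y) :
      GoodPair E u x ∨ GoodPair E u y := by
    refine (h.goodPair_or hE hux huy fun hmem ↦ ?_).imp GoodPair.symm GoodPair.symm
    have hu3 := IsTwin.three_le_hdeg_apex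
      ⟨h.ne, hux, huy, hmem, h.hdeg_left, h.hdeg_right⟩ hE hα
    rw [mem_degTwo] at hu
    omega
  have hcard := hE.card_singleEdges_add_card_inter_le hα hlt fun f hf ↦
    nbr_union_nbr_inter_nonempty hE.1 hgood hf
  obtain ⟨f, hf⟩ := exists_hasEdges h.hdeg_left h.mem (by simp)
  obtain ⟨g, hg⟩ := exists_hasEdges h.hdeg_right h.mem (by simp)
  have hnbr : nbr E x ∪ nbr E y ⊆ {x, y, a} ∪ (f.erase x ∪ g.erase y) := by
    intro u hu
    simp only [Finset.mem_union, mem_nbr] at hu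
    obtain ⟨hux, e, he, hxe, hue⟩ | ⟨huy, e, he, hye, hue⟩ := hu
    · obtain rfl | rfl := hf.eq_or_eq he hxe <;> grind
    · obtain rfl | rfl := hg.eq_or_eq he hye <;> grind
  have hseven : (nbr E x ∪ nbr E y).card ≤ 7 := by
    have hcard := (Finset.card_le_card hnbr).trans (Finset.card_union_le ..)
    have hunion := Finset.card_union_le (f.erase x) (g.erase y)
    rw [Finset.card_erase_of_mem hf.symm.mem_left.2, Finset.card_erase_of_mem hg.symm.mem_left.2,
      hE.1 f hf.symm.mem_left.1, hE.1 g hg.symm.mem_left.1] at hunion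
    rw [hE.1 _ h.mem] at hcard
    omega
  have htwo : 2 ≤ ((nbr E x ∪ nbr E y) ∩ degTwo E).card := by
    rw [← Finset.card_pair h.ne]
    have hxy : x ∈ nbr E y := mem_nbr.2 ⟨h.ne, _, h.mem, by simp, by simp⟩
    refine Finset.card_le_card (Finset.insert_subset ?_ (Finset.singleton_subset_iff.2 ?_))
    · simp [hxy, mem_degTwo, h.hdeg_left]
    · simp [mem_nbr_comm.1 hxy, mem_degTwo, h.hdeg_right]
  omega

/-- The vertices of degree two each of whose hyperedges contains another vertex of degree two. -/
def pairedVertices (E : Finset (Finset α)) : Finset α :=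
  {u ∈ degTwo E | ∀ f ∈ E, u ∈ f → f ∉ singleEdges E}

lemma card_degTwo_le (E : Finset (Finset α)) :
    (degTwo E).card ≤ (singleEdges E).card + (pairedVertices E).card := by
  have hsub : degTwo E ⊆ (singleEdges E).biUnion (degTwo E ∩ ·) ∪ pairedVertices E := by
    intro u hu
    by_cases h : u ∈ pairedVertices E
    · exact Finset.mem_union_right _ h
    simp only [pairedVertices, Finset.mem_filter, hu, true_and, not_forall, not_not] at h
    obtain ⟨f, -, huf, hf⟩ := h
    exact Finset.mem_union_left _ (Finset.mem_biUnion.2 ⟨f, hf, Finset.mem_inter.2 ⟨hu, huf⟩⟩)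
  have hsingle : ((singleEdges E).biUnion (degTwo E ∩ ·)).card ≤ (singleEdges E).card * 1 :=
    Finset.card_biUnion_le_card_mul _ _ _ fun f hf ↦ (Finset.mem_filter.1 hf).2.le
  have hcard := (Finset.card_le_card hsub).trans (Finset.card_union_le ..)
  omega

namespace IsSaturated

lemma exists_isTwin_of_mem_pairedVertices (hE : IsSaturated E) (hu : u ∈ pairedVertices E)
    (hf : f ∈ E) (huf : u ∈ f) : ∃ x a, f = {u, x, a} ∧ IsTwin E u x a := by
  obtain ⟨hu2, hpaired⟩ := Finset.mem_filter.1 hu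
  have huD := Finset.mem_inter.2 ⟨hu2, huf⟩
  have hne : (degTwo E ∩ f).card ≠ 1 := fun hone ↦
    hpaired f hf huf (Finset.mem_filter.2 ⟨hf, hone⟩)
  have hpos := Finset.card_pos.2 ⟨u, huD⟩
  obtain ⟨x, hx, hxu⟩ := Finset.exists_mem_ne (by omega : 1 < (degTwo E ∩ f).card) u
  rw [Finset.mem_inter, mem_degTwo] at huD hx
  exact ⟨x, hE.1.exists_isTwin hf huf hx.2 hxu.symm huD.1 hx.1⟩

-- The two hyperedges at `u` have the same apex, but a completion needs two different ones.
lemma not_goodPair_of_mem_pairedVertices (hE : IsSaturated E) (hα : 57 ≤ Fintype.card α)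
    (hlt : E.card < Fintype.card α) (hu : u ∈ pairedVertices E) : ¬ GoodPair E u x := by
  intro h
  obtain ⟨f, hf⟩ := Finset.card_pos.1 (two_pos.trans_le h.two_le_hdeg)
  obtain ⟨hf, huf⟩ := Finset.mem_filter.1 hf
  obtain ⟨g, hg⟩ := exists_hasEdges (mem_degTwo.1 (Finset.mem_filter.1 hu).1) hf huf
  obtain ⟨y, a, rfl, hfa⟩ := hE.exists_isTwin_of_mem_pairedVertices hu hf huf
  obtain ⟨z, b, rfl, hgb⟩ := hE.exists_isTwin_of_mem_pairedVertices hu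
    hg.symm.mem_left.1 hg.symm.mem_left.2
  obtain rfl : a = b := by
    by_contra hab
    exact (hfa.card_le hgb hE hα hab).not_gt hlt
  obtain ⟨q, hq⟩ := hfa.exists_isCompletion hg h
  obtain ⟨-, -, -, -, -, haq⟩ := nodup_four_iff.1 hq.nodup
  exact haq (hgb.eq_apex hq.mem_right hq.three_le_right).symm

lemma card_pairedVertices_le_one (hE : IsSaturated E) (hα : 57 ≤ Fintype.card α)
    (hlt : E.card < Fintype.card α) : (pairedVertices E).card ≤ 1 := by
  refine Finset.card_le_one.2 fun u hu v hv ↦ ?_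
  by_contra huv
  obtain ⟨w, -, hw⟩ := Finset.exists_mem_notMem_of_card_lt_card
    (s := {u, v} ∪ nbr E u) (t := Finset.univ) (by
      have hcard := Finset.card_union_le {u, v} (nbr E u)
      have hN := hE.1.card_nbr_le u
      rw [mem_degTwo.1 (Finset.mem_filter.1 hu).1] at hN
      rw [Finset.card_pair huv] at hcard
      rw [Finset.card_univ]
      omega)
  simp only [Finset.mem_union, Finset.mem_insert, Finset.mem_singleton, not_or] at hw
  have hmem : {u, v, w} ∉ E := fun h ↦
    hw.2 (mem_nbr.2 ⟨hw.1.1, _, h, by simp, by simp⟩)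
  obtain h | h | h := hE.goodPair_or huv (Ne.symm hw.1.1) (Ne.symm hw.1.2) hmem
  exacts [hE.not_goodPair_of_mem_pairedVertices hα hlt hu h,
    hE.not_goodPair_of_mem_pairedVertices hα hlt hu h,
    hE.not_goodPair_of_mem_pairedVertices hα hlt hv h]

end IsSaturated

lemma IsTwin.eq_or_mem_nbr (h : IsTwin E x y a) (hE : IsSaturated E) (hα : 57 ≤ Fintype.card α)
    (hlt : E.card < Fintype.card α) (u : α) : u = a ∨ u ∈ nbr E a := by
  refine or_iff_not_imp_left.2 fun hua ↦ ?_
  obtain rfl | hux := eq_or_ne u x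
  · exact mem_nbr.2 ⟨hua, _, h.mem, by simp, by simp⟩
  obtain rfl | huy := eq_or_ne u y
  · exact mem_nbr.2 ⟨hua, _, h.mem, by simp, by simp⟩
  refine (h.mem_nbr_apex hE hux huy fun hmem ↦ ?_).1
  have h' : IsTwin E x y u := ⟨h.ne, hux, huy, hmem, h.hdeg_left, h.hdeg_right⟩
  exact (h.card_le h' hE hα (Ne.symm hua)).not_gt hlt

lemma IsTwin.card_le_excess (h : IsTwin E x y a) (hE : IsSaturated E)
    (hα : 57 ≤ Fintype.card α) (hlt : E.card < Fintype.card α) :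
    Fintype.card α ≤ 2 * excess E + 7 := by
  have huniv : Finset.univ ⊆ insert a (nbr E a) := fun u _ ↦
    Finset.mem_insert.2 (h.eq_or_mem_nbr hE hα hlt u)
  have hcard := (Finset.card_le_card huniv).trans (Finset.card_insert_le a (nbr E a))
  have hN := hE.1.card_nbr_le a
  have ha := hdeg_le_excess_add E a
  rw [Finset.card_univ] at hcard
  omega

theorem IsSaturated.card_le (hE : IsSaturated E) (hα : 87 ≤ Fintype.card α) :
    Fintype.card α ≤ E.card := by
  by_contra! hlt
  have hexcess := hE.excess_le_card_degTwo (by omega) hlt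
  by_cases hone : ∀ f ∈ E, (degTwo E ∩ f).card ≤ 1
  · have hdegTwo := hE.card_degTwo_le_of_forall_le_one (by omega) hlt hone
    have hcard := hE.card_le_of_excess
    omega
  · push Not at hone
    obtain ⟨f, hf, hone⟩ := hone
    obtain ⟨x, hx, y, hy, hxy⟩ := Finset.one_lt_card.1 hone
    simp only [Finset.mem_inter, mem_degTwo] at hx hy
    obtain ⟨a, -, h⟩ := hE.1.exists_isTwin hf hx.2 hy.2 hxy hx.1 hy.1
    have hcard := h.card_le_excess hE (by omega) hlt
    have hsingle := h.card_singleEdges_le hE (by omega) hlt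
    have hpaired := hE.card_pairedVertices_le_one (by omega) hlt
    have hdegTwo := card_degTwo_le E
    omega

end Counting

section Gadget

variable {α β : Type*} [DecidableEq α] [DecidableEq β]
  {E : Finset (Finset α)} {P : Finset (Sym2 α)} {φ : α ↪ β} {x y z : β} {a b c : α}

omit [DecidableEq α] [DecidableEq β] in
lemma exists_map_eq {s : Finset β} (hs : ∀ w ∈ s, w ∈ Set.range φ) :
    ∃ t : Finset α, t.map φ = s := by
  refine ⟨s.preimage φ φ.injective.injOn, Finset.ext fun w ↦ ?_⟩
  simp only [Finset.mem_map, Finset.mem_preimage]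
  refine ⟨by rintro ⟨v, hv, rfl⟩; exact hv, fun hw ↦ ?_⟩
  obtain ⟨v, rfl⟩ := hs w hw
  exact ⟨v, hw, rfl⟩

omit [DecidableEq α] [DecidableEq β] in
lemma HasBerge.of_map {F : Finset (Finset β)} (h : HasBerge F (P.map φ.sym2Map))
    (hF : ∀ p ∈ P, ∀ f ∈ F, (∀ v ∈ p, φ v ∈ f) → ∃ e ∈ E, e.map φ = f) : HasBerge E P := by
  obtain ⟨ψ, hψ⟩ := h
  have edge (p) (hp : p ∈ P) : ∃ e ∈ E, e.map φ = ψ (φ.sym2Map p) :=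
    hF p hp _ (hψ.mem_edges _ (Finset.mem_map_of_mem _ hp)) fun v hv ↦
      hψ.mem _ (Finset.mem_map_of_mem _ hp) _ (Sym2.mem_map.2 ⟨v, hv, rfl⟩)
  choose! ψ' hE hmap using edge
  refine ⟨ψ', fun p hp q hq hpq ↦ ?_, hE, fun p hp v hv ↦ ?_⟩
  · refine φ.sym2Map.injective (hψ.injOn (Finset.mem_map_of_mem _ hp)
      (Finset.mem_map_of_mem _ hq) ?_)
    rw [← hmap p hp, ← hmap q hq, hpq]
  · rw [← Finset.mem_map' φ, hmap p hp]
    exact hψ.mem _ (Finset.mem_map_of_mem _ hp) _ (Sym2.mem_map.2 ⟨v, hv, rfl⟩)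

/-- A good pair spanning a Berge triangle with every other vertex: the pairs to which the
two-edge gadget can be attached. -/
def HubPair (E : Finset (Finset α)) (a b : α) : Prop :=
  GoodPair E a b ∧ ∀ c, c ≠ a → c ≠ b → HasBerge E (cliquePairs {a, b, c})

/-- The copy of `E` along `φ` together with the two-edge gadget `{x, y, φ a}`, `{x, y, φ b}`,
where `x` and `y` are meant to be the two vertices outside the range of `φ`. -/
def addGadget (E : Finset (Finset α)) (φ : α ↪ β) (x y : β) (a b : α) : Finset (Finset β) :=
  insert {x, y, φ a} (insert {x, y, φ b} (E.map (Finset.mapEmbedding φ).toEmbedding))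

omit [DecidableEq α] in
lemma mem_addGadget {e : Finset β} : e ∈ addGadget E φ x y a b ↔
    e = {x, y, φ a} ∨ e = {x, y, φ b} ∨ ∃ f ∈ E, f.map φ = e := by
  simp [addGadget]

omit [DecidableEq α] in
lemma map_mem_addGadget {e : Finset α} (he : e ∈ E) : e.map φ ∈ addGadget E φ x y a b :=
  mem_addGadget.2 (.inr (.inr ⟨e, he, rfl⟩))

lemma HubPair.hasBerge_singleton (h : HubPair E a b) : HasBerge E {s(a, b)} := by
  obtain ⟨c, -, -, hc, -⟩ := h.1.exists_three_le_hdeg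
  simp only [Finset.mem_insert, Finset.mem_singleton, not_or] at hc
  refine (h.2 c hc.1 hc.2).mono subset_rfl ?_
  simpa [mk_mem_cliquePairs] using h.1.ne

section

variable (hrange : ∀ w, w ∉ Set.range φ ↔ w = x ∨ w = y)
include hrange

omit [DecidableEq α]

omit [DecidableEq β] in
lemma apply_ne_of_range (v : α) : φ v ≠ x ∧ φ v ≠ y :=
  not_or.1 fun h ↦ (hrange (φ v)).2 h ⟨v, rfl⟩

lemma pair_notMem_addGadget (hab : a ≠ b) :
    {x, y, φ a} ∉ insert {x, y, φ b} (E.map (Finset.mapEmbedding φ).toEmbedding) ∧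
      {x, y, φ b} ∉ E.map (Finset.mapEmbedding φ).toEmbedding := by
  have hφ := apply_ne_of_range hrange
  have hnew (c) : {x, y, φ c} ∉ E.map (Finset.mapEmbedding φ).toEmbedding := fun h ↦ by
    obtain ⟨f, -, hf⟩ := Finset.mem_map.1 h
    obtain ⟨v, -, hv⟩ := Finset.mem_map.1 (hf.ge (Finset.mem_insert_self x _))
    exact (hφ v).1 hv
  refine ⟨?_, hnew b⟩
  rw [Finset.mem_insert, not_or]
  refine ⟨fun h ↦ ?_, hnew a⟩
  have : φ a ∈ ({x, y, φ b} : Finset β) := h ▸ by simp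
  simp [hφ, hab] at this

lemma card_addGadget (hab : a ≠ b) : (addGadget E φ x y a b).card = E.card + 2 := by
  obtain ⟨ha, hb⟩ := pair_notMem_addGadget (E := E) hrange hab
  rw [addGadget, Finset.card_insert_of_notMem ha, Finset.card_insert_of_notMem hb,
    Finset.card_map]

lemma hasBerge_addGadget (h : HasBerge E P) (hab : a ≠ b) (hz : z ∉ Set.range φ) :
    HasBerge (addGadget E φ x y a b)
      (insert s(z, φ a) (insert s(z, φ b) (P.map φ.sym2Map))) := by
  obtain ⟨ha, hb⟩ := pair_notMem_addGadget (E := E) hrange hab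
  have hmem (c) : ∀ v ∈ s(z, φ c), v ∈ ({x, y, φ c} : Finset β) := by
    obtain rfl | rfl := (hrange z).1 hz <;> simp
  exact ((h.map φ fun e he ↦ Finset.mem_map_of_mem _ he).insert hb (hmem b)).insert ha (hmem a)

lemma is3Uniform_addGadget (hE : Is3Uniform E) (hxy : x ≠ y) :
    Is3Uniform (addGadget E φ x y a b) := by
  have hnew (c) : ({x, y, φ c} : Finset β).card = 3 :=
    Finset.card_eq_three.2 
    ⟨x, y, φ c, hxy, (apply_ne_of_range hrange c).1.symm, (apply_ne_of_range hrange c).2.symm, rfl⟩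
  intro e he
  obtain rfl | rfl | ⟨f, hf, rfl⟩ := mem_addGadget.1 he
  · exact hnew a
  · exact hnew b
  · rw [Finset.card_map, hE f hf]

omit hrange in
lemma hdeg_addGadget_le (hz : z ∉ Set.range φ) : hdeg (addGadget E φ x y a b) z ≤ 2 := by
  have hsub : incidentEdges (addGadget E φ x y a b) z ⊆ {{x, y, φ a}, {x, y, φ b}} := by
    intro e he
    rw [mem_incidentEdges, mem_addGadget] at he
    obtain ⟨rfl | rfl | ⟨f, -, rfl⟩, hze⟩ := he
    · simp
    · simp
    · obtain ⟨v, -, rfl⟩ := Finset.mem_map.1 hze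
      exact absurd ⟨v, rfl⟩ hz
  exact (Finset.card_le_card hsub).trans Finset.card_le_two

lemma not_isBergeK4_addGadget (hE : ¬ IsBergeK4 E) : ¬ IsBergeK4 (addGadget E φ x y a b) := by
  classical
  rw [isBergeK4_iff] at hE ⊢
  rintro ⟨C, hC, hB⟩
  have hold (w) (hw : w ∈ C) : w ∈ Set.range φ := by
    by_contra hnew
    have := hB.three_le_hdeg hC hw
    have := hdeg_addGadget_le (E := E) (x := x) (y := y) (a := a) (b := b) hnew
    omega
  obtain ⟨D, rfl⟩ := exists_map_eq hold
  rw [Finset.card_map] at hC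
  rw [cliquePairs_map] at hB
  refine hE ⟨D, hC, hB.of_map fun p hp f hf hpf ↦ ?_⟩
  induction p with | _ u v
  obtain ⟨-, -, huv⟩ := mk_mem_cliquePairs.1 hp
  rw [Sym2.ball] at hpf
  have hne := φ.injective.ne huv
  have hφ := apply_ne_of_range hrange
  obtain rfl | rfl | hf := mem_addGadget.1 hf
  · grind
  · grind
  · exact hf

end

lemma HubPair.goodPair_addGadget (h : HubPair E a b)
    (hrange : ∀ w, w ∉ Set.range φ ↔ w = x ∨ w = y) (hz : z ∉ Set.range φ) (hca : c ≠ a)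
    (hcb : c ≠ b) : GoodPair (addGadget E φ x y a b) z (φ c) := by
  have hab := h.1.ne
  have hzr (v) : z ≠ φ v := fun hv ↦ hz ⟨v, hv.symm⟩
  have hne : [z, φ c, φ a, φ b].Nodup := by simp [*]
  refine goodPair_iff_nodup_hasBerge.2 ⟨φ a, φ b, hne,
    (hasBerge_addGadget hrange (h.2 c hca hcb) hab hz).mono subset_rfl fun p hp ↦ ?_⟩
  rw [← cliquePairs_map, Finset.map_insert, Finset.map_insert, Finset.map_singleton]
  induction p with | _ u v
  simp only [Finset.mem_erase, mk_mem_cliquePairs, Finset.mem_insert, Finset.mem_singleton,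
    ne_eq, Sym2.eq_iff] at hp ⊢
  grind

lemma HubPair.hubPair_addGadget (h : HubPair E a b)
    (hrange : ∀ w, w ∉ Set.range φ ↔ w = x ∨ w = y) :
    HubPair (addGadget E φ x y a b) (φ a) (φ b) := by
  refine ⟨h.1.map φ fun _ ↦ map_mem_addGadget, fun w hwa hwb ↦ ?_⟩
  by_cases hw : w ∈ Set.range φ
  · obtain ⟨c, rfl⟩ := hw
    have hB := (h.2 c (by grind) (by grind)).map φ fun _ ↦
      map_mem_addGadget (φ := φ) (x := x) (y := y) (a := a) (b := b)
    simpa [← cliquePairs_map] using hB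
  · have hB := hasBerge_addGadget hrange h.hasBerge_singleton h.1.ne hw
    refine hB.mono subset_rfl fun p hp ↦ ?_
    induction p with | _ u v
    simp only [mk_mem_cliquePairs, Finset.mem_insert, Finset.mem_singleton, Finset.map_singleton,
      Function.Embedding.sym2Map_apply, Sym2.map_mk, Sym2.eq_iff] at hp ⊢
    grind

lemma HubPair.isSaturated_addGadget [Fintype α] [Fintype β] (h : HubPair E a b)
    (hE : IsSaturated E) (hrange : ∀ w, w ∉ Set.range φ ↔ w = x ∨ w = y) (hxy : x ≠ y) :
    IsSaturated (addGadget E φ x y a b) := by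
  obtain ⟨h3, hfree, hgood⟩ := isSaturated_iff.1 hE
  refine isSaturated_iff.2 ⟨is3Uniform_addGadget hrange h3 hxy,
    not_isBergeK4_addGadget hrange hfree, fun e he heE ↦ ?_⟩
  by_cases hold : ∀ w ∈ e, w ∈ Set.range φ
  · obtain ⟨f, rfl⟩ := exists_map_eq hold
    obtain ⟨u, hu, v, hv, huv⟩ :=
      hgood f (by rwa [Finset.card_map] at he) fun hf ↦ heE (map_mem_addGadget hf)
    exact ⟨φ u, Finset.mem_map_of_mem φ hu, φ v, Finset.mem_map_of_mem φ hv,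
      huv.map φ fun _ ↦ map_mem_addGadget⟩
  push Not at hold
  obtain ⟨z, hze, hz⟩ := hold
  by_cases hc : ∃ c, c ≠ a ∧ c ≠ b ∧ φ c ∈ e
  · obtain ⟨c, hca, hcb, hce⟩ := hc
    exact ⟨z, hze, φ c, hce, h.goodPair_addGadget hrange hz hca hcb⟩
  push Not at hc
  have hsub (w) (hw : w ∈ e) : w = x ∨ w = y ∨ w = φ a ∨ w = φ b := by
    by_cases hwr : w ∈ Set.range φ
    · obtain ⟨c, rfl⟩ := hwr
      by_cases hca : c = a
      · exact .inr (.inr (.inl (hca ▸ rfl)))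
      · exact .inr (.inr (.inr (by_contra fun hcb ↦ hc c hca (fun h ↦ hcb (h ▸ rfl)) hw)))
    · have := (hrange w).1 hwr
      tauto
  have ha : φ a ∈ e := by
    by_contra ha
    refine heE (mem_addGadget.2 (.inr (.inl (Finset.eq_of_subset_of_card_le (fun w hw ↦ ?_)
      (Finset.card_le_three.trans he.ge)))))
    grind
  have hb : φ b ∈ e := by
    by_contra hb
    refine heE (mem_addGadget.2 (.inl (Finset.eq_of_subset_of_card_le (fun w hw ↦ ?_)
      (Finset.card_le_three.trans he.ge))))
    grind
  exact ⟨φ a, ha, φ b, hb, h.1.map φ fun _ ↦ map_mem_addGadget⟩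

end Gadget

section Bases

variable {α : Type*} [DecidableEq α] {E : Finset (Finset α)} {u v a b c : α}

omit [DecidableEq α] in
lemma goodPair_of_edges (x y : α) (eux euy evx evy exy : Finset α)
    (hcore : [u, v, x, y].Nodup := by decide +revert)
    (hedges : [eux, euy, evx, evy, exy].Nodup := by decide +revert)
    (hE : ∀ f ∈ [eux, euy, evx, evy, exy], f ∈ E := by decide +revert)
    (hmem : (u ∈ eux ∧ x ∈ eux) ∧ (u ∈ euy ∧ y ∈ euy) ∧ (v ∈ evx ∧ x ∈ evx) ∧
      (v ∈ evy ∧ y ∈ evy) ∧ x ∈ exy ∧ y ∈ exy := by decide +revert) :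
    GoodPair E u v := by
  obtain ⟨huv, hux, huy, hvx, hvy, hxy⟩ := nodup_four_iff.1 hcore
  simp only [List.forall_mem_cons] at hE
  simp only [and_assoc] at hmem
  exact ⟨x, y, huv, hux, huy, hvx, hvy, hxy, eux, euy, evx, evy, exy,
    hE.1, hE.2.1, hE.2.2.1, hE.2.2.2.1, hE.2.2.2.2.1, hedges, hmem⟩

lemma hasBerge_triangle_of_edges (eab eac ebc : Finset α)
    (hedges : [eab, eac, ebc].Nodup := by decide)
    (hE : ∀ f ∈ [eab, eac, ebc], f ∈ E := by decide)
    (hmem : (a ∈ eab ∧ b ∈ eab) ∧ (a ∈ eac ∧ c ∈ eac) ∧ b ∈ ebc ∧ c ∈ ebc := by decide) :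
    HasBerge E (cliquePairs {a, b, c}) := by
  have hB : HasBerge [eab, eac, ebc].toFinset [s(a, b), s(a, c), s(b, c)].toFinset :=
    .of_forall₂ (by simpa using hmem) hedges
  refine hB.mono (fun f hf ↦ hE f (List.mem_toFinset.1 hf)) fun p hp ↦ ?_
  induction p with | _ x y
  simp only [mk_mem_cliquePairs, Finset.mem_insert, Finset.mem_singleton, List.mem_toFinset,
    List.mem_cons, List.not_mem_nil, Sym2.eq_iff] at hp ⊢
  grind

/-- The tight cycle on five vertices, the base of the construction for odd orders. -/
def tightCycle : Finset (Finset (Fin 5)) := Finset.univ.image fun i ↦ {i, i + 1, i + 2}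

lemma goodPair_tightCycle {u v : Fin 5} (huv : u ≠ v) : GoodPair tightCycle u v := by
  have h₁ (u : Fin 5) : GoodPair tightCycle u (u + 1) :=
    goodPair_of_edges (u + 4) (u + 2) {u + 3, u + 4, u} {u, u + 1, u + 2} {u + 4, u, u + 1}
      {u + 1, u + 2, u + 3} {u + 2, u + 3, u + 4}
  have h₂ (u : Fin 5) : GoodPair tightCycle u (u + 2) :=
    goodPair_of_edges (u + 1) (u + 3) {u + 4, u, u + 1} {u + 3, u + 4, u} {u, u + 1, u + 2}
      {u + 2, u + 3, u + 4} {u + 1, u + 2, u + 3}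
  have h : v = u + 1 ∨ u = v + 1 ∨ v = u + 2 ∨ u = v + 2 := by decide +revert
  obtain rfl | rfl | rfl | rfl := h
  · exact h₁ u
  · exact (h₁ v).symm
  · exact h₂ u
  · exact (h₂ v).symm

lemma isSaturated_tightCycle : IsSaturated tightCycle := by
  refine isSaturated_iff.2 ⟨by unfold Is3Uniform; decide, fun h ↦ ?_, fun e he _ ↦ ?_⟩
  · obtain ⟨C, hC, ψ, hψ⟩ := isBergeK4_iff.1 h
    have hcard := hψ.card_le
    rw [card_cliquePairs, hC] at hcard
    exact absurd hcard (by decide)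
  · obtain ⟨u, hu, v, hv, huv⟩ := Finset.one_lt_card.1 (by omega : 1 < e.card)
    exact ⟨u, hu, v, hv, goodPair_tightCycle huv⟩

lemma hubPair_tightCycle : HubPair tightCycle 0 1 := by
  refine ⟨goodPair_tightCycle (by decide), fun c hc₀ hc₁ ↦ ?_⟩
  obtain rfl | rfl | rfl : c = 2 ∨ c = 3 ∨ c = 4 := by decide +revert
  · exact hasBerge_triangle_of_edges {4, 0, 1} {0, 1, 2} {1, 2, 3}
  · exact hasBerge_triangle_of_edges {0, 1, 2} {3, 4, 0} {1, 2, 3}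
  · exact hasBerge_triangle_of_edges {0, 1, 2} {3, 4, 0} {4, 0, 1}

/-- The base of the construction for even orders. Its good pairs include all pairs between
`{0, 1, 2}` and `{3, 4, 5}`, and these two triples are hyperedges. -/
def sixBase : Finset (Finset (Fin 6)) :=
  {{0, 1, 2}, {0, 1, 3}, {0, 1, 4}, {0, 2, 3}, {0, 2, 5}, {3, 4, 5}}

lemma goodPair_sixBase {u v : Fin 6} (hu : u < 3) (hv : 3 ≤ v) : GoodPair sixBase u v := by
  have hu : u = 0 ∨ u = 1 ∨ u = 2 := by decide +revert
  have hv : v = 3 ∨ v = 4 ∨ v = 5 := by decide +revert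
  rcases hu with rfl | rfl | rfl <;> rcases hv with rfl | rfl | rfl
  · exact goodPair_of_edges 1 2 {0, 1, 4} {0, 2, 5} {0, 1, 3} {0, 2, 3} {0, 1, 2}
  · exact goodPair_of_edges 1 3 {0, 1, 2} {0, 2, 3} {0, 1, 4} {3, 4, 5} {0, 1, 3}
  · exact goodPair_of_edges 2 3 {0, 1, 2} {0, 1, 3} {0, 2, 5} {3, 4, 5} {0, 2, 3}
  · exact goodPair_of_edges 0 2 {0, 1, 4} {0, 1, 2} {0, 1, 3} {0, 2, 3} {0, 2, 5}
  · exact goodPair_of_edges 0 3 {0, 1, 2} {0, 1, 3} {0, 1, 4} {3, 4, 5} {0, 2, 3}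
  · exact goodPair_of_edges 0 3 {0, 1, 2} {0, 1, 3} {0, 2, 5} {3, 4, 5} {0, 2, 3}
  · exact goodPair_of_edges 0 1 {0, 2, 5} {0, 1, 2} {0, 2, 3} {0, 1, 3} {0, 1, 4}
  · exact goodPair_of_edges 0 3 {0, 1, 2} {0, 2, 3} {0, 1, 4} {3, 4, 5} {0, 1, 3}
  · exact goodPair_of_edges 0 3 {0, 1, 2} {0, 2, 3} {0, 2, 5} {3, 4, 5} {0, 1, 3}

-- A Berge-K4 would use all six hyperedges, but only one vertex of `{3, 4, 5}` has degree three.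
lemma not_isBergeK4_sixBase : ¬ IsBergeK4 sixBase := by
  rw [isBergeK4_iff]
  rintro ⟨C, hC, hB⟩
  obtain ⟨ψ, hψ⟩ := id hB
  obtain ⟨p, hp, hpψ⟩ := hψ.exists_eq_of_card_le (f := {3, 4, 5})
    (by rw [card_cliquePairs, hC]; decide) (by decide)
  have hmem := hψ.mem p hp
  induction p with | _ u v
  obtain ⟨hu, hv, huv⟩ := mk_mem_cliquePairs.1 hp
  rw [hpψ, Sym2.ball] at hmem
  have eq_three : ∀ w ∈ ({3, 4, 5} : Finset (Fin 6)), 3 ≤ hdeg sixBase w → w = 3 := by decide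
  exact huv ((eq_three u hmem.1 (hB.three_le_hdeg hC hu)).trans
    (eq_three v hmem.2 (hB.three_le_hdeg hC hv)).symm)

lemma isSaturated_sixBase : IsSaturated sixBase := by
  refine isSaturated_iff.2
    ⟨by unfold Is3Uniform; decide, not_isBergeK4_sixBase, fun e he heE ↦ ?_⟩
  have crossing : ∀ e : Finset (Fin 6), e.card = 3 → e ∉ sixBase →
      ∃ u ∈ e, ∃ v ∈ e, u < 3 ∧ 3 ≤ v := by decide
  obtain ⟨u, hu, v, hv, hu₃, hv₃⟩ := crossing e he heE
  exact ⟨u, hu, v, hv, goodPair_sixBase hu₃ hv₃⟩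

lemma hubPair_sixBase : HubPair sixBase 0 3 := by
  refine ⟨goodPair_sixBase (by decide) (by decide), fun c hc₀ hc₃ ↦ ?_⟩
  obtain rfl | rfl | rfl | rfl : c = 1 ∨ c = 2 ∨ c = 4 ∨ c = 5 := by decide +revert
  · exact hasBerge_triangle_of_edges {0, 2, 3} {0, 1, 2} {0, 1, 3}
  · exact hasBerge_triangle_of_edges {0, 1, 3} {0, 1, 2} {0, 2, 3}
  · exact hasBerge_triangle_of_edges {0, 1, 3} {0, 1, 4} {3, 4, 5}
  · exact hasBerge_triangle_of_edges {0, 1, 3} {0, 2, 5} {3, 4, 5}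

end Bases

lemma notMem_range_castAddEmb_two_iff {m : ℕ} (w : Fin (m + 2)) :
    w ∉ Set.range (Fin.castAddEmb (n := m) 2) ↔ w = Fin.natAdd m 0 ∨ w = Fin.natAdd m 1 := by
  simp only [Set.mem_range, not_exists, Fin.ext_iff, Fin.castAddEmb_apply, Fin.val_castAdd,
    Fin.val_natAdd]
  refine ⟨fun h ↦ ?_, fun h v ↦ ?_⟩
  · have hw : ¬ (w : ℕ) < m := fun hw ↦ h ⟨w, hw⟩ rfl
    simp only [Fin.val_zero, Fin.val_one]
    omega
  · simp only [Fin.val_zero, Fin.val_one] at h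
    omega

theorem exists_isSaturated_card_eq_hubPair {n : ℕ} (hn : 5 ≤ n) :
    ∃ E : Finset (Finset (Fin n)), IsSaturated E ∧ E.card = n ∧ ∃ a b, HubPair E a b := by
  induction n using Nat.strong_induction_on with
  | _ n ih =>
    obtain rfl | rfl | ⟨m, hm, rfl⟩ : n = 5 ∨ n = 6 ∨ ∃ m, 5 ≤ m ∧ n = m + 2 := by
      by_cases h : n < 7
      · omega
      · exact .inr (.inr ⟨n - 2, by omega, by omega⟩)
    · exact ⟨tightCycle, isSaturated_tightCycle, by decide, 0, 1, hubPair_tightCycle⟩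
    · exact ⟨sixBase, isSaturated_sixBase, by decide, 0, 3, hubPair_sixBase⟩
    · obtain ⟨E, hE, hcard, a, b, hab⟩ := ih m (by omega) hm
      have hrange := notMem_range_castAddEmb_two_iff (m := m)
      exact ⟨_, hab.isSaturated_addGadget hE hrange (by simp [Fin.ext_iff]),
        by rw [card_addGadget hrange hab.1.ne, hcard], _, _, hab.hubPair_addGadget hrange⟩

theorem stmt_18_general (n : ℕ) (hn : 87 ≤ n) : satNumber n = n := by
  obtain ⟨E, hE, hcard, -⟩ := exists_isSaturated_card_eq_hubPair (by omega : 5 ≤ n)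
  refine le_antisymm (Nat.sInf_le ⟨E, hE, hcard⟩) (le_csInf ⟨n, E, hE, hcard⟩ ?_)
  rintro _ ⟨F, hF, rfl⟩
  simpa using hF.card_le (by simpa using hn)

theorem stmt_18 (n : ℕ) (hn : 96 ≤ n) : satNumber n = n :=
  stmt_18_general n (by omega)
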